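/- arXiv:1810.12845 — 10 statements merged into one kernel-verified Lean document; each statement's English description precedes it below -/
import Mathlib

section
/- Let V be a finite-dimensional real normed vector space and let A ⊆ V be additive (for all x, y ∈ A, x + y ∈ A) and approximately diluable (for every ε > 0 there exists δ > 0 such that for every x ∈ A and every real λ with 0 ≤ λ ≤ δ there exists y ∈ A with ‖λ • x − y‖ < ε). Then the topological closure of A is a convex cone: closure(A) is a convex set, and t • z ∈ closure(A) for every z ∈ closure(A) and every real t > 0. -/
/-- The closure of an additive, approximately diluable subset of a
finite-dimensional real normed vector space is a convex cone. -/
theorem closure_of_additive_approxDiluable_is_convex_cone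
    {V : Type*} [NormedAddCommGroup V] [NormedSpace ℝ V] [FiniteDimensional ℝ V]
    (A : Set V)
    (hadd : ∀ x ∈ A, ∀ y ∈ A, x + y ∈ A)
    (hdil : ∀ ε : ℝ, 0 < ε → ∃ δ : ℝ, 0 < δ ∧
      ∀ x ∈ A, ∀ l : ℝ, 0 ≤ l → l ≤ δ → ∃ y ∈ A, ‖l • x - y‖ < ε) :
    Convex ℝ (closure A) ∧
      ∀ z ∈ closure A, ∀ t : ℝ, 0 < t → t • z ∈ closure A := by
  have hmul : ∀ x ∈ A, ∀ n : ℕ, ((n : ℝ) + 1) • x ∈ A := by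
    intro x hx n
    induction n with
    | zero => simpa using hx
    | succ k ih =>
      have h := hadd _ ih x hx
      have e : (((k + 1 : ℕ) : ℝ) + 1) • x = ((k : ℝ) + 1) • x + x := by
        push_cast
        module
      rw [e]
      exact h
  have hA : ∀ t : ℝ, 0 ≤ t → ∀ x ∈ A, t • x ∈ closure A := by
    intro t ht x hx
    rw [Metric.mem_closure_iff]
    intro ε hε
    obtain ⟨δ, hδ, h⟩ := hdil ε hε
    obtain ⟨n, hn⟩ := exists_nat_gt (t / δ)
    have hn1 : (0 : ℝ) < (n : ℝ) + 1 := by positivity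
    have hle : t / ((n : ℝ) + 1) ≤ δ := by
      rw [div_lt_iff₀ hδ] at hn
      rw [div_le_iff₀ hn1]
      nlinarith
    obtain ⟨y, hy, hxy⟩ := h _ (hmul x hx n) (t / ((n : ℝ) + 1)) (by positivity) hle
    refine ⟨y, hy, ?_⟩
    rw [smul_smul, div_mul_cancel₀ _ hn1.ne'] at hxy
    rwa [dist_eq_norm]
  have hcl : ∀ t : ℝ, 0 ≤ t → ∀ z ∈ closure A, t • z ∈ closure A := by
    intro t ht z hz
    have h := map_mem_closure (continuous_const_smul t) hz (t := closure A) (hA t ht)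
    rwa [closure_closure] at h
  refine ⟨?_, fun z hz t ht => hcl t ht.le z hz⟩
  intro x hx y hy a b ha hb _
  exact map_mem_closure₂ continuous_add (hcl a ha x hx) (hcl b hb y hy) hadd
end

section
/- The linear span of the classical entropy region Σ_n inside the space Finset (Fin n) → ℝ has dimension 2^n − 1; that is, Module.finrank ℝ (Submodule.span ℝ Σ_n) = 2^n − 1. -/
/-- Base-2 Shannon entropy of a probability mass function (on a finite type this
is the finite sum `-∑ x, q x * log₂ (q x)`, with `0 * log₂ 0 = 0`). -/
noncomputable def shannonEntropy {X : Type} (q : PMF X) : ℝ :=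
  -∑' x, (q x).toReal * Real.logb 2 ((q x).toReal)

/-- The entropy vector of an `n`-partite random variable: for `I ⊆ Fin n`, the
Shannon entropy of the marginal of `p` on the coordinates in `I`. -/
noncomputable def entropyVector {n : ℕ} {𝒳 : Fin n → Type} (p : PMF (∀ i, 𝒳 i)) :
    Finset (Fin n) → ℝ :=
  fun I => shannonEntropy (p.map fun x => fun i : I => x i.1)

/-- The classical entropy region `Σ_n`: all entropy vectors of `n`-partite random
variables on nonempty finite alphabets. -/
def classicalEntropyRegion (n : ℕ) : Set (Finset (Fin n) → ℝ) :=
  { v | ∃ (𝒳 : Fin n → Type) (_ : ∀ i, Finite (𝒳 i)) (_ : ∀ i, Nonempty (𝒳 i))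
      (p : PMF (∀ i, 𝒳 i)), v = entropyVector p }

lemma shannonEntropy_pure_aux {X : Type} (a : X) : shannonEntropy (PMF.pure a) = 0 := by
  classical
  unfold shannonEntropy
  have : ∀ x, ((PMF.pure a) x).toReal * Real.logb 2 (((PMF.pure a) x).toReal) = 0 := by
    intro x
    rw [PMF.pure_apply]
    split_ifs <;> simp
  simp only [this, tsum_zero, neg_zero]

lemma shannonEntropy_map_aux {X Y : Type} (q : PMF X) (f : X → Y) (hf : Function.Injective f) :
    shannonEntropy (q.map f) = shannonEntropy q := by
  classical
  unfold shannonEntropy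
  have hval : ∀ x, (q.map f) (f x) = q x := by
    intro x
    rw [PMF.map_apply, tsum_eq_single x]
    · simp
    · intro b hb
      rw [if_neg]
      exact fun h => hb (hf h.symm)
  congr 1
  rw [← hf.tsum_eq (f := fun y => ((q.map f) y).toReal * Real.logb 2 (((q.map f) y).toReal))]
  · simp [hval]
  · intro y hy
    by_contra hne
    apply hy
    have : (q.map f) y = 0 := by
      rw [PMF.map_apply, ENNReal.tsum_eq_zero]
      intro x
      rw [if_neg]
      exact fun h => hne ⟨x, h.symm⟩
    simp [this]

lemma shannonEntropy_bool_aux : shannonEntropy (PMF.uniformOfFintype Bool) = 1 := by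
  unfold shannonEntropy
  rw [tsum_fintype]
  simp [Real.logb_inv]

/-- A single uniform bit shared by the parties in `J`. -/
noncomputable def sharedBit (n : ℕ) (J : Finset (Fin n)) : PMF (∀ _ : Fin n, Bool) :=
  (PMF.uniformOfFintype Bool).map fun b i => if i ∈ J then b else false

lemma entropyVector_sharedBit (n : ℕ) (J I : Finset (Fin n)) :
    entropyVector (sharedBit n J) I = if Disjoint I J then 0 else 1 := by
  unfold entropyVector sharedBit
  rw [PMF.map_comp]
  split_ifs with h
  · have : ((fun (x : Fin n → Bool) => fun i : I => x i.1) ∘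
        fun (b : Bool) (i : Fin n) => if i ∈ J then b else false)
        = Function.const Bool (fun _ : I => false) := by
      funext b i
      simp [Finset.disjoint_left.mp h i.2]
    rw [this, PMF.map_const, shannonEntropy_pure_aux]
  · rw [shannonEntropy_map_aux, shannonEntropy_bool_aux]
    rw [Finset.not_disjoint_iff] at h
    obtain ⟨a, haI, haJ⟩ := h
    intro b c hbc
    have := congrFun hbc ⟨a, haI⟩
    simpa [haJ] using this

lemma sharedBit_mem (n : ℕ) (J : Finset (Fin n)) :
    (fun I => if Disjoint I J then (0 : ℝ) else 1) ∈
      Submodule.span ℝ (classicalEntropyRegion n) := by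
  apply Submodule.subset_span
  refine ⟨fun _ => Bool, fun _ => inferInstance, fun _ => inferInstance, sharedBit n J, ?_⟩
  funext I
  rw [entropyVector_sharedBit]

lemma single_mem_span (n : ℕ) (K : Finset (Fin n)) : K ≠ ∅ →
    (Pi.single K (1 : ℝ) : Finset (Fin n) → ℝ) ∈
      Submodule.span ℝ (classicalEntropyRegion n) := by
  induction K using Finset.strongInduction with
  | H K ih =>
    intro hK
    have h1 := Submodule.sub_mem _ (sharedBit_mem n Finset.univ) (sharedBit_mem n Kᶜ)
    have h2 : ∑ L ∈ K.ssubsets.erase ∅, (Pi.single L (1 : ℝ) : Finset (Fin n) → ℝ) ∈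
        Submodule.span ℝ (classicalEntropyRegion n) := by
      apply Submodule.sum_mem
      intro L hL
      rw [Finset.mem_erase, Finset.mem_ssubsets] at hL
      exact ih L hL.2 hL.1
    have h3 := Submodule.sub_mem _ h1 h2
    convert h3 using 1
    funext I
    have e1 : Disjoint I Finset.univ ↔ I = ∅ := by
      constructor
      · intro h
        exact Finset.disjoint_self_iff_empty _ |>.mp (h.mono_right (Finset.subset_univ I))
      · rintro rfl; simp
    have e2 : Disjoint I Kᶜ ↔ I ⊆ K := by
      rw [disjoint_compl_right_iff]
    simp only [Pi.sub_apply, Finset.sum_apply, Pi.single_apply, Finset.sum_ite_eq,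
      Finset.mem_erase, Finset.mem_ssubsets, e1, e2]
    by_cases a : I = ∅
    · subst a
      simp [Ne.symm hK]
    · by_cases b : I = K
      · subst b
        simp [a]
      · by_cases c : I ⊆ K
        · have : I ⊂ K := lt_of_le_of_ne c b
          simp [a, b, c, this]
        · have : ¬ I ⊂ K := fun h => c h.1
          simp [a, b, c, this]

lemma span_eq_ker (n : ℕ) : Submodule.span ℝ (classicalEntropyRegion n) =
    LinearMap.ker (LinearMap.proj (R := ℝ) (φ := fun _ : Finset (Fin n) => ℝ) ∅) := by
  apply le_antisymm
  · rw [Submodule.span_le]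
    rintro v ⟨X, _, _, p, rfl⟩
    simp only [SetLike.mem_coe, LinearMap.mem_ker, LinearMap.proj_apply]
    unfold entropyVector
    have : (fun (x : ∀ i, X i) => fun i : (∅ : Finset (Fin n)) => x i.1) =
        Function.const _ (fun i => absurd i.2 (Finset.notMem_empty _)) := by
      funext x i
      exact absurd i.2 (Finset.notMem_empty _)
    rw [this, PMF.map_const, shannonEntropy_pure_aux]
  · intro v hv
    simp only [LinearMap.mem_ker, LinearMap.proj_apply] at hv
    rw [pi_eq_sum_univ' v]
    apply Submodule.sum_mem
    intro K _
    by_cases hK : K = ∅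
    · subst hK
      simp [hv]
    · apply Submodule.smul_mem
      convert single_mem_span n K hK using 1

/-- The span of the classical entropy region has dimension `2^n - 1`. -/
theorem finrank_span_classicalEntropyRegion (n : ℕ) :
    Module.finrank ℝ (Submodule.span ℝ (classicalEntropyRegion n)) = 2 ^ n - 1 := by
  rw [span_eq_ker]
  have h := LinearMap.finrank_range_add_finrank_ker
    (LinearMap.proj (R := ℝ) (φ := fun _ : Finset (Fin n) => ℝ) ∅)
  rw [LinearMap.range_eq_top.mpr (LinearMap.proj_surjective _), finrank_top,
    Module.finrank_self, Module.finrank_fintype_fun_eq_card, Fintype.card_finset,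
    Fintype.card_fin] at h
  omega
end

section
/- The topological closure of the quantum entropy region Γ_n inside the space Finset (Fin n) → ℝ is a convex cone: closure(Γ_n) is a convex set, and t • v ∈ closure(Γ_n) for every v ∈ closure(Γ_n) and every real t > 0. -/
open scoped ComplexOrder

/-- Von Neumann entropy (base 2) of a matrix: `-∑ k, λ_k * log₂ λ_k` over the
eigenvalues of the matrix if it is Hermitian (and `0` otherwise). -/
noncomputable def vonNeumannEntropy {X : Type} [Fintype X] [DecidableEq X]
    (M : Matrix X X ℂ) : ℝ :=
  letI := Classical.propDecidable M.IsHermitian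
  if h : M.IsHermitian then -∑ k, h.eigenvalues k * Real.logb 2 (h.eigenvalues k)
  else 0

/-- Glue an assignment on `I` and an assignment on `Iᶜ` to a full assignment. -/
def glueAssignment {n : ℕ} {d : Fin n → ℕ} (I : Finset (Fin n))
    (a : ∀ i : I, Fin (d i.1)) (c : ∀ i : (Iᶜ : Finset (Fin n)), Fin (d i.1)) :
    ∀ i : Fin n, Fin (d i) :=
  fun i => if h : i ∈ I then a ⟨i, h⟩ else c ⟨i, Finset.mem_compl.mpr h⟩

/-- The reduced density matrix `ρ_I`: partial trace of `ρ` over the systems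
outside of `I`. -/
noncomputable def reducedState {n : ℕ} {d : Fin n → ℕ}
    (ρ : Matrix (∀ i, Fin (d i)) (∀ i, Fin (d i)) ℂ) (I : Finset (Fin n)) :
    Matrix (∀ i : I, Fin (d i.1)) (∀ i : I, Fin (d i.1)) ℂ :=
  fun a b => ∑ c : ∀ i : (Iᶜ : Finset (Fin n)), Fin (d i.1),
    ρ (glueAssignment I a c) (glueAssignment I b c)

/-- The entropy vector `s(ρ)` of an `n`-partite density matrix. -/
noncomputable def qEntropyVector {n : ℕ} {d : Fin n → ℕ}
    (ρ : Matrix (∀ i, Fin (d i)) (∀ i, Fin (d i)) ℂ) : Finset (Fin n) → ℝ :=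
  fun I => vonNeumannEntropy (reducedState ρ I)

/-- The quantum entropy region `Γ_n`: all entropy vectors of `n`-partite density
matrices (positive semidefinite, trace one), over all local dimensions. -/
def quantumEntropyRegion (n : ℕ) : Set (Finset (Fin n) → ℝ) :=
  { v | ∃ (d : Fin n → ℕ) (_ : ∀ i, 1 ≤ d i)
      (ρ : Matrix (∀ i, Fin (d i)) (∀ i, Fin (d i)) ℂ),
        ρ.PosSemidef ∧ ρ.trace = 1 ∧ v = qEntropyVector ρ }


open Matrix Kronecker in
/-- `l` lists the (possibly padded) spectrum of `M`. -/
def IsSpec {X Y : Type} [Fintype X] [DecidableEq X] [Fintype Y] [DecidableEq Y]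
    (M : Matrix X X ℂ) (l : Y → ℝ) : Prop :=
  ∃ U : Matrix X Y ℂ, Uᴴ * U = 1 ∧ M = U * diagonal (fun y => (l y : ℂ)) * Uᴴ

/-- the entropy function -/
noncomputable def vnEta (x : ℝ) : ℝ := -(x * Real.logb 2 x)

lemma vnEta_zero : vnEta 0 = 0 := by simp [vnEta]

lemma vnEta_mul (x y : ℝ) : vnEta (x * y) = x * vnEta y + y * vnEta x := by
  unfold vnEta
  rcases eq_or_ne x 0 with rfl | hx
  · simp
  rcases eq_or_ne y 0 with rfl | hy
  · simp
  rw [Real.logb_mul hx hy]; ring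

section spec
open Matrix Kronecker Polynomial

variable {X Y Z W : Type} [Fintype X] [DecidableEq X] [Fintype Y] [DecidableEq Y]
  [Fintype Z] [DecidableEq Z] [Fintype W] [DecidableEq W]

lemma isSpec_eigenvalues {M : Matrix X X ℂ} (h : M.IsHermitian) : IsSpec M h.eigenvalues := by
  refine ⟨h.eigenvectorUnitary, ?_, ?_⟩
  · exact Unitary.coe_star_mul_self h.eigenvectorUnitary
  · conv_lhs => rw [h.spectral_theorem, Unitary.conjStarAlgAut_apply]
    rfl

lemma IsSpec.isHermitian {M : Matrix X X ℂ} {l : Y → ℝ} (h : IsSpec M l) : M.IsHermitian := by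
  obtain ⟨U, -, rfl⟩ := h
  apply isHermitian_mul_mul_conjTranspose
  ext i j
  by_cases hij : i = j
  · subst hij; simp
  · simp [hij, Ne.symm hij]

lemma IsSpec.entropy {M : Matrix X X ℂ} {l : Y → ℝ} (h : IsSpec M l) :
    vonNeumannEntropy M = ∑ y, vnEta (l y) := by
  have hH := h.isHermitian
  have e1 : vonNeumannEntropy M = ∑ k, vnEta (hH.eigenvalues k) := by
    unfold vonNeumannEntropy
    rw [dif_pos hH]
    simp [vnEta]
  rw [e1]
  obtain ⟨U, hU, hM⟩ := h
  have key := charpoly_mul_comm' (U * diagonal (fun y => (l y : ℂ))) Uᴴ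
  rw [← hM, ← Matrix.mul_assoc, hU, Matrix.one_mul, charpoly_diagonal, hH.charpoly_eq] at key
  have hr := congrArg (fun p : ℂ[X] => (p.roots.map (fun z => vnEta z.re)).sum) key
  have aux : ∀ (k : ℕ) {T : Type} [Fintype T] (m : T → ℝ),
      (((Polynomial.X ^ k * ∏ i, (Polynomial.X - C (m i : ℂ)) : ℂ[X]).roots.map (fun z => vnEta z.re)).sum)
        = ∑ i, vnEta (m i) := by
    intro k T _ m
    have hne : (∏ i, (Polynomial.X - C (m i : ℂ)) : ℂ[X]) ≠ 0 :=
      Finset.prod_ne_zero_iff.mpr fun i _ => X_sub_C_ne_zero _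
    rw [roots_mul (mul_ne_zero (pow_ne_zero _ X_ne_zero) hne), roots_prod _ _ hne]
    simp [vnEta_zero, Multiset.map_nsmul, Multiset.sum_nsmul]
  simpa only [aux, Complex.coe_algebraMap, RCLike.ofReal_eq_complex_ofReal, Complex.ofRealHom_eq_coe] using hr

lemma IsSpec.sum {M : Matrix X X ℂ} {l : Y → ℝ} (h : IsSpec M l) :
    M.trace = ((∑ y, l y : ℝ) : ℂ) := by
  obtain ⟨U, hU, rfl⟩ := h
  rw [Matrix.trace_mul_comm, ← Matrix.mul_assoc, hU, Matrix.one_mul, trace_diagonal]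
  push_cast; rfl

lemma IsSpec.kron {M : Matrix X X ℂ} {l : Y → ℝ} (h : IsSpec M l)
    {N : Matrix Z Z ℂ} {m : W → ℝ} (k : IsSpec N m) :
    IsSpec (M ⊗ₖ N) (fun p : Y × W => l p.1 * m p.2) := by
  obtain ⟨U, hU, rfl⟩ := h
  obtain ⟨V, hV, rfl⟩ := k
  refine ⟨U ⊗ₖ V, ?_, ?_⟩
  · rw [conjTranspose_kronecker, ← mul_kronecker_mul, hU, hV, one_kronecker_one]
  · rw [conjTranspose_kronecker, mul_kronecker_mul, mul_kronecker_mul,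
      diagonal_kronecker_diagonal]
    simp

lemma IsSpec.submatrix {M : Matrix X X ℂ} {l : Y → ℝ} (h : IsSpec M l) (e : Z ≃ X) :
    IsSpec (M.submatrix e e) l := by
  obtain ⟨U, hU, rfl⟩ := h
  refine ⟨U.submatrix e id, ?_, ?_⟩
  · rw [conjTranspose_submatrix, submatrix_mul_equiv, hU]; simp
  · ext i j
    simp [Matrix.mul_apply]

lemma IsSpec.flag {M : Matrix X X ℂ} {l : Y → ℝ} (h : IsSpec M l) (p : ℝ)
    (V : Matrix Z X ℂ) (z : Matrix Z Unit ℂ) (hV : Vᴴ * V = 1) (hz : zᴴ * z = 1)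
    (hVz : Vᴴ * z = 0) :
    IsSpec ((p : ℂ) • (V * M * Vᴴ) + ((1 - p : ℝ) : ℂ) • (z * zᴴ))
      (Sum.elim (fun y => p * l y) (fun _ : Unit => 1 - p)) := by
  obtain ⟨U, hU, rfl⟩ := h
  have hzV : zᴴ * V = 0 := by
    have := congrArg conjTranspose hVz
    simpa using this
  have d : diagonal (fun y => ((Sum.elim (fun y => p * l y) (fun _ : Unit => 1 - p) y : ℝ) : ℂ))
      = fromBlocks ((p:ℂ) • diagonal (fun y => (l y : ℂ))) 0 0
        (((1 - p : ℝ) : ℂ) • (1 : Matrix Unit Unit ℂ)) := by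
    ext (i | i) (j | j)
    · by_cases hij : i = j
      · subst hij; simp
      · simp [hij]
    · simp
    · simp
    · simp
  refine ⟨fromCols (V * U) z, ?_, ?_⟩
  · rw [conjTranspose_fromCols_eq_fromRows_conjTranspose, fromRows_mul_fromCols,
      conjTranspose_mul]
    have a1 : Uᴴ * Vᴴ * (V * U) = 1 := by
      rw [Matrix.mul_assoc, ← Matrix.mul_assoc Vᴴ, hV, Matrix.one_mul, hU]
    have a2 : Uᴴ * Vᴴ * z = 0 := by rw [Matrix.mul_assoc, hVz, Matrix.mul_zero]
    have a3 : zᴴ * (V * U) = 0 := by rw [← Matrix.mul_assoc, hzV, Matrix.zero_mul]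
    rw [a1, a2, a3, hz, fromBlocks_one]
  · rw [d, conjTranspose_fromCols_eq_fromRows_conjTranspose, fromCols_mul_fromBlocks,
      fromCols_mul_fromRows, conjTranspose_mul]
    simp [Matrix.mul_assoc]

end spec

section states
open Matrix Kronecker

variable {n : ℕ}

lemma sum_glue {d : Fin n → ℕ} (I : Finset (Fin n)) {β : Type} [AddCommMonoid β]
    (f : (∀ i, Fin (d i)) → β) :
    ∑ x, f x = ∑ a : ∀ i : I, Fin (d i.1), ∑ c : ∀ i : (Iᶜ : Finset (Fin n)), Fin (d i.1),
      f (glueAssignment I a c) := by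
  rw [← Fintype.sum_prod_type']
  symm
  refine Fintype.sum_bijective
    (fun p : (∀ i : I, Fin (d i.1)) × (∀ i : (Iᶜ : Finset (Fin n)), Fin (d i.1)) =>
      glueAssignment I p.1 p.2) ?_ _ _ (fun _ => rfl)
  constructor
  · rintro ⟨a, c⟩ ⟨a', c'⟩ h
    have h' : ∀ i, glueAssignment I a c i = glueAssignment I a' c' i := fun i => congrFun h i
    refine Prod.ext (funext fun i => ?_) (funext fun i => ?_)
    · have := h' i.1
      simpa only [glueAssignment, dif_pos i.2] using this
    · have := h' i.1
      simpa only [glueAssignment, dif_neg (Finset.mem_compl.mp i.2)] using this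
  · intro x
    refine ⟨(fun i => x i.1, fun i => x i.1), ?_⟩
    ext i
    simp [glueAssignment]

lemma trace_reducedState {d : Fin n → ℕ} (ρ : Matrix (∀ i, Fin (d i)) (∀ i, Fin (d i)) ℂ)
    (I : Finset (Fin n)) : (reducedState ρ I).trace = ρ.trace := by
  simp only [Matrix.trace, Matrix.diag, reducedState]
  exact (sum_glue I (fun x => ρ x x)).symm

lemma isHermitian_reducedState {d : Fin n → ℕ}
    {ρ : Matrix (∀ i, Fin (d i)) (∀ i, Fin (d i)) ℂ} (h : ρ.IsHermitian)
    (I : Finset (Fin n)) : (reducedState ρ I).IsHermitian := by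
  ext a b
  simp only [Matrix.conjTranspose_apply, reducedState, star_sum]
  exact Finset.sum_congr rfl fun c _ => h.apply _ _

/-- splitting of composite local indices -/
def prodE {ι : Type} (d e : ι → ℕ) :
    (∀ i, Fin (d i * e i)) ≃ (∀ i, Fin (d i)) × (∀ i, Fin (e i)) :=
  (Equiv.piCongrRight fun _ => finProdFinEquiv.symm).trans
    (Equiv.arrowProdEquivProdArrow ι (fun i => Fin (d i)) (fun i => Fin (e i)))

lemma prodE_glue {d e : Fin n → ℕ} (I : Finset (Fin n))
    (a : ∀ i : I, Fin (d i.1 * e i.1))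
    (c : ∀ i : (Iᶜ : Finset (Fin n)), Fin (d i.1 * e i.1)) :
    prodE d e (glueAssignment (d := fun i => d i * e i) I a c) =
      (glueAssignment I (prodE (fun i : I => d i.1) (fun i : I => e i.1) a).1
        (prodE (fun i : (Iᶜ : Finset (Fin n)) => d i.1) (fun i => e i.1) c).1,
       glueAssignment I (prodE (fun i : I => d i.1) (fun i : I => e i.1) a).2
        (prodE (fun i : (Iᶜ : Finset (Fin n)) => d i.1) (fun i => e i.1) c).2) := by
  refine Prod.ext ?_ ?_ <;>
  · funext i
    by_cases h : i ∈ I <;>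
      simp [prodE, glueAssignment, Equiv.arrowProdEquivProdArrow, h]

lemma reducedState_kron {d e : Fin n → ℕ}
    (ρ : Matrix (∀ i, Fin (d i)) (∀ i, Fin (d i)) ℂ)
    (σ : Matrix (∀ i, Fin (e i)) (∀ i, Fin (e i)) ℂ) (I : Finset (Fin n)) :
    reducedState (d := fun i => d i * e i) ((ρ ⊗ₖ σ).submatrix (prodE d e) (prodE d e)) I =
      (reducedState ρ I ⊗ₖ reducedState σ I).submatrix
        (prodE (fun i : I => d i.1) (fun i : I => e i.1))
        (prodE (fun i : I => d i.1) (fun i : I => e i.1)) := by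
  ext a b
  simp only [reducedState, Matrix.submatrix_apply, Matrix.kroneckerMap_apply, prodE_glue]
  rw [Finset.sum_mul_sum, ← Fintype.sum_prod_type']
  exact (prodE (fun i : (Iᶜ : Finset (Fin n)) => d i.1) (fun i => e i.1)).sum_comp
    (fun p => ρ (glueAssignment I _ p.1) (glueAssignment I _ p.1) *
      σ (glueAssignment I _ p.2) (glueAssignment I _ p.2))

lemma add_mem_region {v w : Finset (Fin n) → ℝ} (hv : v ∈ quantumEntropyRegion n)
    (hw : w ∈ quantumEntropyRegion n) : v + w ∈ quantumEntropyRegion n := by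
  obtain ⟨d, hd, ρ, hρ, tρ, rfl⟩ := hv
  obtain ⟨e, he, σ, hσ, tσ, rfl⟩ := hw
  refine ⟨fun i => d i * e i, fun i => Nat.mul_pos (hd i) (he i),
    (ρ ⊗ₖ σ).submatrix (prodE d e) (prodE d e), ?_, ?_, ?_⟩
  · exact (hρ.kronecker hσ).submatrix _
  · have : ((ρ ⊗ₖ σ).submatrix (prodE d e) (prodE d e)).trace = (ρ ⊗ₖ σ).trace :=
      (prodE d e).sum_comp (fun p => (ρ ⊗ₖ σ) p p)
    rw [this, trace_kronecker, tρ, tσ, one_mul]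
  · funext I
    simp only [Pi.add_apply, qEntropyVector]
    rw [reducedState_kron]
    have s1 := isSpec_eigenvalues (isHermitian_reducedState hρ.isHermitian I)
    have s2 := isSpec_eigenvalues (isHermitian_reducedState hσ.isHermitian I)
    have t1 := s1.sum
    have t2 := s2.sum
    rw [trace_reducedState, tρ] at t1
    rw [trace_reducedState, tσ] at t2
    norm_cast at t1 t2
    rw [((s1.kron s2).submatrix _).entropy, s1.entropy, s2.entropy, Fintype.sum_prod_type]
    simp only [vnEta_mul, Finset.sum_add_distrib, ← Finset.mul_sum, ← Finset.sum_mul]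
    rw [← t1, ← t2]
    ring

/-- shift of all local indices by one -/
def sc {ι : Type} {d : ι → ℕ} (a : ∀ i, Fin (d i)) : ∀ i, Fin (d i + 1) := fun i => (a i).succ

lemma sc_injective {ι : Type} {d : ι → ℕ} : Function.Injective (sc (d := d)) := by
  intro a b h
  funext i
  exact Fin.succ_injective _ (congrFun h i)

lemma sc_ne_zero {ι : Type} [Nonempty ι] {d : ι → ℕ} (a : ∀ i, Fin (d i)) :
    sc a ≠ (fun _ => 0) := by
  intro h
  exact Fin.succ_ne_zero _ (congrFun h (Classical.arbitrary ι))

/-- the product of local isometries -/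
def shiftV {ι : Type} [Fintype ι] [DecidableEq ι] (d : ι → ℕ) :
    Matrix (∀ i, Fin (d i + 1)) (∀ i, Fin (d i)) ℂ :=
  fun x a => if x = sc a then 1 else 0

/-- the flag vector -/
def flagZ {ι : Type} [Fintype ι] [DecidableEq ι] (d : ι → ℕ) :
    Matrix (∀ i, Fin (d i + 1)) Unit ℂ :=
  fun x _ => if x = (fun _ => 0) then 1 else 0

/-- the flagged mixture -/
noncomputable def flagState {ι : Type} [Fintype ι] [DecidableEq ι] {d : ι → ℕ} (p : ℝ)
    (ρ : Matrix (∀ i, Fin (d i)) (∀ i, Fin (d i)) ℂ) :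
    Matrix (∀ i, Fin (d i + 1)) (∀ i, Fin (d i + 1)) ℂ :=
  (p : ℂ) • (shiftV d * ρ * (shiftV d)ᴴ) + ((1 - p : ℝ) : ℂ) • (flagZ d * (flagZ d)ᴴ)

section
variable {ι : Type} [Fintype ι] [DecidableEq ι] {d : ι → ℕ}

lemma shiftV_iso : (shiftV d)ᴴ * shiftV d = 1 := by
  ext a b
  simp only [Matrix.mul_apply, Matrix.conjTranspose_apply, shiftV, Matrix.one_apply]
  simp [sc_injective.eq_iff, eq_comm]

lemma flagZ_iso : (flagZ d)ᴴ * flagZ d = 1 := by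
  ext a b
  simp [Matrix.mul_apply, Matrix.conjTranspose_apply, flagZ]

lemma shiftV_flagZ [Nonempty ι] : (shiftV d)ᴴ * flagZ d = 0 := by
  ext a b
  simp only [Matrix.mul_apply, Matrix.conjTranspose_apply, shiftV, flagZ]
  simp [(sc_ne_zero a).symm]

lemma trace_flagState (p : ℝ) {ρ : Matrix (∀ i, Fin (d i)) (∀ i, Fin (d i)) ℂ}
    (h : ρ.trace = 1) : (flagState p ρ).trace = 1 := by
  unfold flagState
  rw [trace_add, trace_smul, trace_smul, Matrix.trace_mul_comm, ← Matrix.mul_assoc, shiftV_iso,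
    Matrix.one_mul, h, Matrix.trace_mul_comm, flagZ_iso]
  simp

lemma posSemidef_flagState {p : ℝ} (h0 : 0 ≤ p) (h1 : p ≤ 1)
    {ρ : Matrix (∀ i, Fin (d i)) (∀ i, Fin (d i)) ℂ}
    (h : ρ.PosSemidef) : (flagState p ρ).PosSemidef := by
  unfold flagState
  refine ((h.mul_mul_conjTranspose_same _).smul ?_).add
    ((posSemidef_self_mul_conjTranspose _).smul ?_)
  · exact_mod_cast h0
  · exact_mod_cast sub_nonneg.mpr h1

lemma flagState_apply (p : ℝ) (ρ : Matrix (∀ i, Fin (d i)) (∀ i, Fin (d i)) ℂ)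
    (x y : ∀ i, Fin (d i + 1)) :
    flagState p ρ x y = p * (∑ a, ∑ b, (if x = sc a then 1 else 0) *
      (if y = sc b then 1 else 0) * ρ a b) +
      ((1 - p : ℝ) : ℂ) * ((if x = (fun _ => 0) then 1 else 0) *
        (if y = (fun _ => 0) then 1 else 0)) := by
  simp only [flagState, Matrix.add_apply, Matrix.smul_apply, smul_eq_mul, Matrix.mul_assoc]
  congr 2
  · simp only [Matrix.mul_apply, Matrix.conjTranspose_apply, shiftV, Finset.mul_sum]
    refine Finset.sum_congr rfl fun a _ => Finset.sum_congr rfl fun b _ => ?_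
    split_ifs <;> simp
  · simp only [Matrix.mul_apply, Matrix.conjTranspose_apply, flagZ]
    simp
end

lemma glue_eq_iff {d : Fin n → ℕ} (I : Finset (Fin n)) (x : ∀ i : I, Fin (d i.1))
    (c : ∀ i : (Iᶜ : Finset (Fin n)), Fin (d i.1)) (y : ∀ i, Fin (d i)) :
    glueAssignment I x c = y ↔ x = (fun i : I => y i.1) ∧ c = (fun i : (Iᶜ : Finset (Fin n)) => y i.1) := by
  constructor
  · rintro rfl
    constructor
    · funext i; simp [glueAssignment]
    · funext i; simp [glueAssignment, Finset.mem_compl.mp i.2]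
  · rintro ⟨rfl, rfl⟩
    funext i
    simp [glueAssignment]

lemma glue_sc {d : Fin n → ℕ} (I : Finset (Fin n)) (x : ∀ i : I, Fin (d i.1 + 1))
    (c : ∀ i : (Iᶜ : Finset (Fin n)), Fin (d i.1 + 1))
    (a : ∀ i : I, Fin (d i.1)) (a' : ∀ i : (Iᶜ : Finset (Fin n)), Fin (d i.1)) :
    (glueAssignment (d := fun i => d i + 1) I x c = sc (glueAssignment I a a')) ↔
      x = sc a ∧ c = sc a' := by
  rw [glue_eq_iff]
  have h1 : (fun i : I => sc (glueAssignment I a a') i.1) = sc a := by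
    funext i; simp [sc, glueAssignment]
  have h2 : (fun i : (Iᶜ : Finset (Fin n)) => sc (glueAssignment I a a') i.1) = sc a' := by
    funext i; simp [sc, glueAssignment, Finset.mem_compl.mp i.2]
  rw [h1, h2]

lemma ite_and_mul (P Q : Prop) [Decidable P] [Decidable Q] [Decidable (P ∧ Q)] :
    (if P ∧ Q then (1 : ℂ) else 0) = (if P then 1 else 0) * (if Q then 1 else 0) := by
  by_cases hP : P <;> by_cases hQ : Q <;> simp [hP, hQ]

lemma reducedState_flagState {d : Fin n → ℕ} (p : ℝ)
    (ρ : Matrix (∀ i, Fin (d i)) (∀ i, Fin (d i)) ℂ) (I : Finset (Fin n)) :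
    reducedState (d := fun i => d i + 1) (flagState p ρ) I =
      flagState (d := fun i : I => d i.1) p (reducedState ρ I) := by
  ext x y
  rw [flagState_apply]
  simp only [reducedState, flagState_apply, Finset.sum_add_distrib, ← Finset.mul_sum]
  congr 2
  · have step : ∀ c : ∀ i : (Iᶜ : Finset (Fin n)), Fin (d i.1 + 1),
      (∑ a, ∑ b, (if glueAssignment (d := fun i => d i + 1) I x c = sc a then (1:ℂ) else 0) *
        (if glueAssignment (d := fun i => d i + 1) I y c = sc b then 1 else 0) * ρ a b) =
      ∑ a : ∀ i : I, Fin (d i.1), ∑ b : ∀ i : I, Fin (d i.1),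
        (if x = sc a then 1 else 0) * (if y = sc b then 1 else 0) *
        ∑ a' : ∀ i : (Iᶜ : Finset (Fin n)), Fin (d i.1),
          (if c = sc a' then 1 else 0) *
            ρ (glueAssignment I a a') (glueAssignment I b a') := by
      intro c
      rw [sum_glue I]
      refine Finset.sum_congr rfl fun a _ => ?_
      rw [Finset.sum_congr rfl fun a' _ => sum_glue I _, Finset.sum_comm]
      refine Finset.sum_congr rfl fun b _ => ?_
      rw [Finset.mul_sum]
      refine Finset.sum_congr rfl fun a' _ => ?_
      simp only [glue_sc, ite_and_mul]
      rw [Finset.sum_eq_single a']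
      · split_ifs <;> simp
      · intro b' _ hb
        by_cases h1 : c = sc a'
        · have : c ≠ sc b' := by
            rw [h1]; exact fun h => hb (sc_injective h).symm
          simp [this]
        · simp [h1]
      · simp
    rw [Finset.sum_congr rfl fun c _ => step c, Finset.sum_comm]
    refine Finset.sum_congr rfl fun a _ => ?_
    rw [Finset.sum_comm]
    refine Finset.sum_congr rfl fun b _ => ?_
    rw [← Finset.mul_sum, Finset.sum_comm]
    simp
  · simp only [glue_eq_iff, ite_and_mul]
    rw [Finset.sum_eq_single (fun _ => 0)]
    · simp
    · intro c _ hc; simp [hc]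
    · simp

lemma entropy_empty {d : Fin n → ℕ} {ρ : Matrix (∀ i, Fin (d i)) (∀ i, Fin (d i)) ℂ}
    (h : ρ.IsHermitian) (t : ρ.trace = 1) : qEntropyVector ρ ∅ = 0 := by
  have s1 := isSpec_eigenvalues (isHermitian_reducedState h ∅)
  have t1 := s1.sum
  rw [trace_reducedState, t] at t1
  norm_cast at t1
  rw [qEntropyVector, s1.entropy]
  have : IsEmpty (∅ : Finset (Fin n)) := ⟨fun x => absurd x.2 (Finset.notMem_empty _)⟩
  rw [Fintype.sum_unique] at t1 ⊢
  rw [← t1]; simp [vnEta]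

lemma flag_mem_region {v : Finset (Fin n) → ℝ} (hv : v ∈ quantumEntropyRegion n)
    {p : ℝ} (h0 : 0 ≤ p) (h1 : p ≤ 1) :
    (fun I => p * v I + (if I = ∅ then 0 else vnEta p + vnEta (1 - p))) ∈
      quantumEntropyRegion n := by
  obtain ⟨d, hd, ρ, hρ, tρ, rfl⟩ := hv
  refine ⟨fun i => d i + 1, fun i => by simp, flagState p ρ, posSemidef_flagState h0 h1 hρ,
    trace_flagState p tρ, ?_⟩
  funext I
  by_cases hI : I = ∅
  · subst hI
    rw [entropy_empty hρ.isHermitian tρ, entropy_empty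
      (posSemidef_flagState h0 h1 hρ).isHermitian (trace_flagState p tρ)]
    simp
  · rw [if_neg hI]
    have : Nonempty I := (Finset.nonempty_iff_ne_empty.mpr hI).to_subtype
    have s1 := isSpec_eigenvalues (isHermitian_reducedState hρ.isHermitian I)
    have t1 := s1.sum
    rw [trace_reducedState, tρ] at t1
    norm_cast at t1
    have s2 := s1.flag p (shiftV _) (flagZ _) shiftV_iso flagZ_iso shiftV_flagZ
    simp only [qEntropyVector]
    rw [reducedState_flagState, flagState, s2.entropy, s1.entropy, Fintype.sum_sum_type]
    simp only [Sum.elim_inl, Sum.elim_inr, vnEta_mul, Finset.sum_add_distrib, ← Finset.mul_sum,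
      ← Finset.sum_mul, ← t1]
    simp
    ring

lemma nsmul_mem_region {v : Finset (Fin n) → ℝ} (hv : v ∈ quantumEntropyRegion n) (m : ℕ) :
    ((m + 1 : ℕ) : ℝ) • v ∈ quantumEntropyRegion n := by
  induction m with
  | zero => simpa using hv
  | succ k ih =>
    have := add_mem_region ih hv
    convert this using 1
    push_cast
    module

lemma continuous_vnEta : Continuous vnEta := by
  have : vnEta = fun x => Real.negMulLog x / Real.log 2 := by
    funext x; simp [vnEta, Real.negMulLog, Real.logb]; ring
  rw [this]
  exact Real.continuous_negMulLog.div_const _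

open Filter Topology in
lemma smul_mem_closure {v : Finset (Fin n) → ℝ} (hv : v ∈ quantumEntropyRegion n)
    {t : ℝ} (ht : 0 < t) : t • v ∈ closure (quantumEntropyRegion n) := by
  have hp : Tendsto (fun m : ℕ => t / ((m + 1 : ℕ) : ℝ)) atTop (𝓝 0) :=
    (tendsto_const_div_atTop_nhds_zero_nat t).comp (tendsto_add_atTop_nat 1)
  refine mem_closure_of_tendsto (b := atTop) (f := fun m : ℕ => fun I =>
    (t / ((m + 1 : ℕ) : ℝ)) * (((m + 1 : ℕ) : ℝ) • v) I + (if I = ∅ then 0 else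
      vnEta (t / ((m + 1 : ℕ) : ℝ)) + vnEta (1 - t / ((m + 1 : ℕ) : ℝ)))) ?_ ?_
  · rw [tendsto_pi_nhds]
    intro I
    have e : ∀ m : ℕ, (t / ((m + 1 : ℕ) : ℝ)) * (((m + 1 : ℕ) : ℝ) • v) I = (t • v) I := by
      intro m
      have : ((m + 1 : ℕ) : ℝ) ≠ 0 := by positivity
      simp only [Pi.smul_apply, smul_eq_mul]
      field_simp
    simp only [e]
    by_cases hI : I = ∅
    · simp [hI]
    · simp only [hI, if_false]
      have hc : Continuous fun x : ℝ => (t • v) I + (vnEta x + vnEta (1 - x)) :=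
        continuous_const.add (continuous_vnEta.add
          (continuous_vnEta.comp (continuous_const.sub continuous_id)))
      have := (hc.tendsto 0).comp hp
      simpa [vnEta, Function.comp_def] using this
  · filter_upwards [hp.eventually (eventually_le_nhds (zero_lt_one' ℝ))] with m hm
    exact flag_mem_region (nsmul_mem_region hv m) (by positivity) hm

end states

/-- The closure of the quantum entropy region is a convex cone. -/
theorem closure_quantumEntropyRegion_is_convex_cone (n : ℕ) :
    Convex ℝ (closure (quantumEntropyRegion n)) ∧
      ∀ v ∈ closure (quantumEntropyRegion n), ∀ t : ℝ, 0 < t →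
        t • v ∈ closure (quantumEntropyRegion n) := by
  have hs : ∀ v ∈ closure (quantumEntropyRegion n), ∀ t : ℝ, 0 < t →
      t • v ∈ closure (quantumEntropyRegion n) := by
    intro v hv t ht
    have := map_mem_closure (t := closure (quantumEntropyRegion n))
      (continuous_const_smul t) hv (fun w hw => smul_mem_closure hw ht)
    rwa [closure_closure] at this
  refine ⟨?_, hs⟩
  intro x hx y hy a b ha hb hab
  rcases ha.eq_or_lt with rfl | ha
  · have : b = 1 := by linarith
    subst this
    simpa using hy
  rcases hb.eq_or_lt with rfl | hb
  · have : a = 1 := by linarith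
    subst this
    simpa using hx
  exact map_mem_closure₂ continuous_add (hs x hx a ha) (hs y hy b hb)
    (fun v hv w hw => add_mem_region hv hw)
end

section
/- Let V be a real vector space, let K₁, K₂ ⊆ V be convex cones each containing 0, and let K = K₁ + K₂ = {a + b : a ∈ K₁, b ∈ K₂}. Assume: (i) Submodule.span ℝ K₁ ⊓ Submodule.span ℝ K₂ = ⊥, and (ii) K contains no line through the origin, i.e., for every v ≠ 0 it is not the case that t • v ∈ K for all t ∈ ℝ. Then the set of extremal rays of K equals the union of the set of extremal rays of K₁ and the set of extremal rays of K₂: ext(K) = ext(K₁) ∪ ext(K₂). -/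
open Pointwise

/-- The ray generated by a vector: `{t • v : t ≥ 0}`. -/
def coneRay {V : Type*} [AddCommGroup V] [Module ℝ V] (v : V) : Set V :=
  {w | ∃ t : ℝ, 0 ≤ t ∧ w = t • v}

/-- A ray `R` contained in a set `C` is an extremal ray of `C` if for every
`w ∈ R` and every decomposition `w = x + y` with `x, y ∈ C`, both `x, y ∈ R`. -/
def IsExtremalRay {V : Type*} [AddCommGroup V] [Module ℝ V] (C R : Set V) : Prop :=
  R ⊆ C ∧ (∃ v : V, R = coneRay v) ∧
    ∀ w ∈ R, ∀ x ∈ C, ∀ y ∈ C, w = x + y → x ∈ R ∧ y ∈ R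

/-- The set of extremal rays of `C`. -/
def extremalRays {V : Type*} [AddCommGroup V] [Module ℝ V] (C : Set V) :
    Set (Set V) :=
  {R | IsExtremalRay C R}

theorem aux_sup {V : Type*} [AddCommGroup V] [Module ℝ V] (K₁ K₂ : Set V)
    (hK₁0 : (0 : V) ∈ K₁)
    (hK₂' : ∀ x ∈ K₂, ∀ t : ℝ, 0 < t → t • x ∈ K₂)
    (hK₂0 : (0 : V) ∈ K₂)
    (hspan : Submodule.span ℝ K₁ ⊓ Submodule.span ℝ K₂ = ⊥)
    (hline : ∀ v : V, v ≠ 0 → ¬ (∀ t : ℝ, t • v ∈ K₁ + K₂))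
    (R : Set V) (hR : IsExtremalRay K₁ R) : IsExtremalRay (K₁ + K₂) R := by
  obtain ⟨hsub, hray, hext⟩ := hR
  have key : ∀ b ∈ K₂, ∀ d ∈ K₂, b + d = 0 → b = 0 := by
    intro b hb d hd h
    by_contra hne
    apply hline b hne
    intro t
    refine Set.mem_add.2 ⟨0, hK₁0, t • b, ?_, zero_add _⟩
    rcases lt_trichotomy t 0 with ht | ht | ht
    · have : t • b = (-t) • d := by
        rw [eq_neg_of_add_eq_zero_left h, smul_neg, neg_smul]
      rw [this]
      exact hK₂' d hd _ (by linarith)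
    · rw [ht, zero_smul]; exact hK₂0
    · exact hK₂' b hb t ht
  refine ⟨fun w hw => Set.mem_add.2 ⟨w, hsub hw, 0, hK₂0, add_zero _⟩, hray, ?_⟩
  rintro w hw x hx y hy hwxy
  obtain ⟨a, ha, b, hb, rfl⟩ := Set.mem_add.1 hx
  obtain ⟨c, hc, d, hd, rfl⟩ := Set.mem_add.1 hy
  have hbd : b + d = 0 := by
    have h1 : b + d ∈ Submodule.span ℝ K₁ := by
      have : b + d = w - a - c := by rw [hwxy]; abel
      rw [this]
      exact Submodule.sub_mem _ (Submodule.sub_mem _ (Submodule.subset_span (hsub hw))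
        (Submodule.subset_span ha)) (Submodule.subset_span hc)
    have h2 : b + d ∈ Submodule.span ℝ K₂ :=
      Submodule.add_mem _ (Submodule.subset_span hb) (Submodule.subset_span hd)
    have h3 : b + d ∈ Submodule.span ℝ K₁ ⊓ Submodule.span ℝ K₂ := ⟨h1, h2⟩
    rw [hspan] at h3
    exact (Submodule.mem_bot ℝ).1 h3
  have hb0 := key b hb d hd hbd
  have hd0 := key d hd b hb (by rw [add_comm]; exact hbd)
  subst hb0 hd0
  simp only [add_zero] at hwxy ⊢
  exact hext w hw a ha c hc hwxy

theorem aux_sub {V : Type*} [AddCommGroup V] [Module ℝ V] (K L : Set V) (hKL : K ⊆ L)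
    (hK' : ∀ x ∈ K, ∀ t : ℝ, 0 < t → t • x ∈ K) (hK0 : (0 : V) ∈ K)
    (v : V) (hv : v ∈ K) (hR : IsExtremalRay L (coneRay v)) : IsExtremalRay K (coneRay v) := by
  refine ⟨?_, ⟨v, rfl⟩, fun w hw x hx y hy h => hR.2.2 w hw x (hKL hx) y (hKL hy) h⟩
  rintro _ ⟨t, ht, rfl⟩
  rcases ht.eq_or_lt with h | h
  · rw [← h, zero_smul]; exact hK0
  · exact hK' v hv t h

/-- If two convex cones containing `0` have trivially intersecting spans and
their Minkowski sum contains no line, then the extremal rays of the sum are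
exactly the extremal rays of the summands. -/
theorem extremalRays_of_direct_sum_of_cones
    {V : Type*} [AddCommGroup V] [Module ℝ V] (K₁ K₂ : Set V)
    (hK₁ : Convex ℝ K₁) (hK₁' : ∀ x ∈ K₁, ∀ t : ℝ, 0 < t → t • x ∈ K₁)
    (hK₁0 : (0 : V) ∈ K₁)
    (hK₂ : Convex ℝ K₂) (hK₂' : ∀ x ∈ K₂, ∀ t : ℝ, 0 < t → t • x ∈ K₂)
    (hK₂0 : (0 : V) ∈ K₂)
    (hspan : Submodule.span ℝ K₁ ⊓ Submodule.span ℝ K₂ = ⊥)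
    (hline : ∀ v : V, v ≠ 0 → ¬ (∀ t : ℝ, t • v ∈ K₁ + K₂)) :
    extremalRays (K₁ + K₂) = extremalRays K₁ ∪ extremalRays K₂ := by
  ext R
  constructor
  · intro hR
    obtain ⟨v, rfl⟩ := hR.2.1
    have hvR : v ∈ coneRay v := ⟨1, zero_le_one, (one_smul _ _).symm⟩
    obtain ⟨a, ha, b, hb, hab⟩ := Set.mem_add.1 (hR.1 hvR)
    have hs1 : K₁ ⊆ K₁ + K₂ := fun x hx => Set.mem_add.2 ⟨x, hx, 0, hK₂0, add_zero _⟩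
    have hs2 : K₂ ⊆ K₁ + K₂ := fun x hx => Set.mem_add.2 ⟨0, hK₁0, x, hx, zero_add _⟩
    obtain ⟨s, hs, has⟩ := (hR.2.2 v hvR a (hs1 ha) b (hs2 hb) hab.symm).1
    rcases hs.eq_or_lt with h | h
    · right
      have hvb : b = v := by rw [← hab, has, ← h]; simp
      exact aux_sub K₂ _ hs2 hK₂' hK₂0 v (hvb ▸ hb) hR
    · left
      have hva : s⁻¹ • a = v := by rw [has, smul_smul, inv_mul_cancel₀ h.ne', one_smul]
      exact aux_sub K₁ _ hs1 hK₁' hK₁0 v (hva ▸ hK₁' a ha _ (inv_pos.2 h)) hR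
  · rintro (hR | hR)
    · exact aux_sup K₁ K₂ hK₁0 hK₂' hK₂0 hspan hline R hR
    · rw [add_comm K₁ K₂] at hline ⊢
      rw [inf_comm] at hspan
      exact aux_sup K₂ K₁ hK₂0 hK₁' hK₁0 hspan hline R hR
end

section
/- Let n ≥ 3 and let Γ_n* = {f ∈ V_n : ⟨f,v⟩ ≥ 0 for all v ∈ closure(Γ_n)} be the cone of valid quantum information inequalities. Then Γ_n* is not the direct sum of its balanced part and another cone: there is no convex cone C ⊆ V_n with Submodule.span ℝ C ⊓ B_n = ⊥ and Γ_n* = (Γ_n* ∩ B_n) + C (Minkowski sum of sets). -/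
open scoped ComplexOrder

/-- The standard pairing `⟨f, v⟩ = ∑_{I ⊆ Fin n} f I * v I` on entropy space. -/
noncomputable def entPairing {n : ℕ} (f v : Finset (Fin n) → ℝ) : ℝ :=
  ∑ I : Finset (Fin n), f I * v I

/-- The dual cone of a subset of entropy space. -/
noncomputable def dualCone {n : ℕ} (K : Set (Finset (Fin n) → ℝ)) :
    Set (Finset (Fin n) → ℝ) :=
  {f | ∀ v ∈ K, 0 ≤ entPairing f v}

/-- The balanced subspace `B_n`: functionals `f` with `∑_{I ∋ i} f I = 0` for
every `i`. -/
def balancedSubspace (n : ℕ) : Submodule ℝ (Finset (Fin n) → ℝ) where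
  carrier := {f | ∀ i : Fin n, ∑ I ∈ Finset.univ.filter (fun I => i ∈ I), f I = 0}
  add_mem' := by
    intro a b ha hb
    intro i
    simp only [Pi.add_apply, Finset.sum_add_distrib]
    rw [ha i, hb i, add_zero]
  zero_mem' := by
    intro i
    simp
  smul_mem' := by
    intro c a ha
    intro i
    simp only [Pi.smul_apply, smul_eq_mul, ← Finset.mul_sum]
    rw [ha i, mul_zero]

open Pointwise

open Matrix

/-! ### Spectral formulas for the entropy -/

theorem ent_of_herm {X : Type} [Fintype X] [DecidableEq X] {M : Matrix X X ℂ}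
    (h : M.IsHermitian) :
    vonNeumannEntropy M = ∑ k, -(h.eigenvalues k * Real.logb 2 (h.eigenvalues k)) := by
  unfold vonNeumannEntropy
  rw [dif_pos h, Finset.sum_neg_distrib]

/-- The scalar function summed over the spectrum. -/
noncomputable def entFun (z : ℂ) : ℝ := -(z.re * Real.logb 2 z.re)

theorem ent_roots {X : Type} [Fintype X] [DecidableEq X] {M : Matrix X X ℂ}
    (h : M.IsHermitian) :
    vonNeumannEntropy M = (M.charpoly.roots.map entFun).sum := by
  rw [ent_of_herm h, h.roots_charpoly_eq_eigenvalues, Multiset.map_map]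
  rfl

theorem ent_transpose {X : Type} [Fintype X] [DecidableEq X] {M : Matrix X X ℂ}
    (h : M.IsHermitian) : vonNeumannEntropy Mᵀ = vonNeumannEntropy M := by
  rw [ent_roots h, ent_roots h.transpose, Matrix.charpoly_transpose]

theorem ent_mul_comm {X Y : Type} [Fintype X] [DecidableEq X] [Fintype Y] [DecidableEq Y]
    (A : Matrix X Y ℂ) : vonNeumannEntropy (A * Aᴴ) = vonNeumannEntropy (Aᴴ * A) := by
  rw [ent_roots (Matrix.isHermitian_mul_conjTranspose_self A),
    ent_roots (Matrix.isHermitian_conjTranspose_mul_self A)]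
  have h := congrArg (fun p : Polynomial ℂ => (p.roots.map entFun).sum)
    (Matrix.charpoly_mul_comm' A Aᴴ)
  beta_reduce at h
  have h0 : entFun 0 = 0 := by simp [entFun]
  rw [Polynomial.roots_mul, Polynomial.roots_mul] at h
  · simpa [Multiset.map_nsmul, Multiset.sum_nsmul, h0] using h
  · exact mul_ne_zero (pow_ne_zero _ Polynomial.X_ne_zero) (Matrix.charpoly_monic _).ne_zero
  · exact mul_ne_zero (pow_ne_zero _ Polynomial.X_ne_zero) (Matrix.charpoly_monic _).ne_zero

theorem spec_decomp {X : Type} [Fintype X] [DecidableEq X] {M : Matrix X X ℂ}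
    (h : M.IsHermitian) : ∃ U : Matrix X X ℂ, Uᴴ * U = 1 ∧ U * Uᴴ = 1 ∧
      M = U * diagonal (fun k => (h.eigenvalues k : ℂ)) * Uᴴ := by
  refine ⟨h.eigenvectorUnitary, ?_, ?_, ?_⟩
  · exact Unitary.coe_star_mul_self h.eigenvectorUnitary
  · exact Unitary.coe_mul_star_self h.eigenvectorUnitary
  · have := h.spectral_theorem
    rw [Unitary.conjStarAlgAut_apply] at this
    exact this

theorem psd_factor {X : Type} [Fintype X] [DecidableEq X] {M : Matrix X X ℂ}
    (h : M.PosSemidef) : ∃ R : Matrix X X ℂ, M = R * Rᴴ := by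
  obtain ⟨U, h1, h2, h3⟩ := spec_decomp h.1
  refine ⟨U * diagonal (fun k => (Real.sqrt (h.1.eigenvalues k) : ℂ)), ?_⟩
  rw [conjTranspose_mul, diagonal_conjTranspose, Matrix.mul_assoc, ← Matrix.mul_assoc (diagonal _),
    diagonal_mul_diagonal]
  conv_lhs => rw [h3]
  rw [Matrix.mul_assoc]
  congr 3
  ext k
  simp only [Pi.star_apply, Complex.star_def, Complex.conj_ofReal, ← Complex.ofReal_mul]
  rw [Real.mul_self_sqrt (h.eigenvalues_nonneg k)]

theorem sum_eig {X : Type} [Fintype X] [DecidableEq X] {M : Matrix X X ℂ}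
    (h : M.IsHermitian) (ht : M.trace = 1) : ∑ k, h.eigenvalues k = 1 := by
  have := h.trace_eq_sum_eigenvalues
  rw [ht] at this
  have h2 := congrArg Complex.re this
  simpa using h2.symm

theorem ent_nonneg {X : Type} [Fintype X] [DecidableEq X] {M : Matrix X X ℂ}
    (h : M.PosSemidef) (ht : M.trace = 1) : 0 ≤ vonNeumannEntropy M := by
  rw [ent_of_herm h.1]
  refine Finset.sum_nonneg fun k _ => ?_
  have h0 := h.eigenvalues_nonneg k
  have h1 : h.1.eigenvalues k ≤ 1 := by
    rw [← sum_eig h.1 ht]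
    exact Finset.single_le_sum (fun i _ => h.eigenvalues_nonneg i) (Finset.mem_univ k)
  have := Real.logb_nonpos (b := 2) (by norm_num) h0 h1
  nlinarith

/-- Entropy of a flat state. -/
theorem ent_flat {X : Type} [Fintype X] [DecidableEq X] {M : Matrix X X ℂ}
    (h : M.IsHermitian) (ht : M.trace = 1) (m : ℝ) (hm : M * M = (m : ℂ) • M) :
    vonNeumannEntropy M = -Real.logb 2 m := by
  rw [ent_of_herm h]
  have key : ∀ k, h.eigenvalues k = 0 ∨ h.eigenvalues k = m := by
    intro k
    obtain ⟨U, h1, h2, h3⟩ := spec_decomp h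
    have hD : Uᴴ * M * U = diagonal (fun k => (h.eigenvalues k : ℂ)) := by
      conv_lhs => rw [h3]
      simp only [Matrix.mul_assoc, h1, Matrix.mul_one]
      rw [← Matrix.mul_assoc, h1, Matrix.one_mul]
    have e1 : (Uᴴ * M * U) * (Uᴴ * M * U) = (m : ℂ) • (Uᴴ * M * U) := by
      calc (Uᴴ * M * U) * (Uᴴ * M * U) = Uᴴ * M * (U * Uᴴ) * M * U := by
            simp only [Matrix.mul_assoc]
        _ = Uᴴ * (M * M) * U := by rw [h2, Matrix.mul_one]; simp only [Matrix.mul_assoc]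
        _ = _ := by rw [hm]; simp
    rw [hD, diagonal_mul_diagonal] at e1
    have e2 := congrFun (congrFun e1 k) k
    simp only [diagonal_apply_eq, Matrix.smul_apply, smul_eq_mul] at e2
    have e3 : h.eigenvalues k * h.eigenvalues k = m * h.eigenvalues k := by exact_mod_cast e2
    by_cases hz : h.eigenvalues k = 0
    · exact Or.inl hz
    · exact Or.inr (mul_right_cancel₀ hz e3)
  have : ∀ k, -(h.eigenvalues k * Real.logb 2 (h.eigenvalues k))
      = h.eigenvalues k * (-Real.logb 2 m) := by
    intro k
    rcases key k with hk | hk <;> rw [hk] <;> simp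
  simp_rw [this]
  rw [← Finset.sum_mul, sum_eig h ht, one_mul]

/-! ### Subadditivity -/

theorem marg_left {β κ : Type} [Fintype β] [DecidableEq β] [Fintype κ] [DecidableEq κ]
    (σ : Matrix (β × κ) (β × κ) ℂ) (W U : Matrix β β ℂ) (V : Matrix κ κ ℂ) (hV : V * Vᴴ = 1)
    (hW : W = Matrix.of fun b b' => ∑ k, σ (b, k) (b', k)) (j : β) :
    ∑ l, ((kroneckerMap (· * ·) U V)ᴴ * σ * (kroneckerMap (· * ·) U V)) (j, l) (j, l) = (Uᴴ * W * U) j j := by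
  have hV' : ∀ k k', ∑ l, V k' l * star (V k l) = if k' = k then 1 else 0 := by
    intro k k'
    have := congrFun (congrFun hV k') k
    simpa [Matrix.mul_apply, Matrix.one_apply] using this
  subst hW
  simp only [Matrix.mul_apply, Fintype.sum_prod_type, conjTranspose_apply, kroneckerMap_apply,
    Matrix.of_apply, star_mul', Finset.sum_mul, Finset.mul_sum]
  calc _ = ∑ b', ∑ k', ∑ b, ∑ k, (star (U b j) * σ (b, k) (b', k') * U b' j) *
            ∑ l, V k' l * star (V k l) := by
        rw [Finset.sum_comm]
        refine Finset.sum_congr rfl fun b' _ => ?_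
        rw [Finset.sum_comm]
        refine Finset.sum_congr rfl fun k' _ => ?_
        rw [Finset.sum_comm]
        refine Finset.sum_congr rfl fun b _ => ?_
        rw [Finset.sum_comm]
        refine Finset.sum_congr rfl fun k _ => ?_
        rw [Finset.mul_sum]
        refine Finset.sum_congr rfl fun l _ => ?_
        ring
    _ = _ := by
        simp only [hV', mul_ite, mul_one, mul_zero, Finset.sum_ite_eq, Finset.mem_univ, if_true]
        refine Finset.sum_congr rfl fun b' _ => ?_
        rw [Finset.sum_comm]

theorem marg_right {β κ : Type} [Fintype β] [DecidableEq β] [Fintype κ] [DecidableEq κ]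
    (σ : Matrix (β × κ) (β × κ) ℂ) (W V : Matrix κ κ ℂ) (U : Matrix β β ℂ) (hU : U * Uᴴ = 1)
    (hW : W = Matrix.of fun k k' => ∑ b, σ (b, k) (b, k')) (l : κ) :
    ∑ j, ((kroneckerMap (· * ·) U V)ᴴ * σ * (kroneckerMap (· * ·) U V)) (j, l) (j, l) = (Vᴴ * W * V) l l := by
  rw [← marg_left (σ.submatrix Prod.swap Prod.swap) W V U hU (by rw [hW]; rfl) l]
  refine Finset.sum_congr rfl fun j _ => ?_
  simp only [Matrix.mul_apply, Fintype.sum_prod_type, conjTranspose_apply, kroneckerMap_apply,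
    star_mul', Finset.sum_mul, submatrix_apply, Prod.swap_prod_mk]
  rw [Finset.sum_comm]
  refine Finset.sum_congr rfl fun k _ => Finset.sum_congr rfl fun b _ => ?_
  rw [Finset.sum_comm]
  refine Finset.sum_congr rfl fun k' _ => Finset.sum_congr rfl fun b' _ => ?_
  ring

/-- Scalar Klein inequality. -/
theorem klein_scalar (t m q : ℝ) (ht : 0 ≤ t) (hm : 0 ≤ m) (hq : 0 ≤ q)
    (h : q = 0 → t * m = 0) :
    t * m - t * q ≤ t * m * Real.log m - t * m * Real.log q := by
  by_cases hm0 : m = 0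
  · subst hm0; simp; positivity
  by_cases hq0 : q = 0
  · have := h hq0
    simp [this, hq0]
  have hm' : 0 < m := lt_of_le_of_ne hm (Ne.symm hm0)
  have hq' : 0 < q := lt_of_le_of_ne hq (Ne.symm hq0)
  have h1 := Real.log_le_sub_one_of_pos (div_pos hq' hm')
  rw [Real.log_div hq0 hm0] at h1
  have h2 : m * (Real.log q - Real.log m) ≤ m * (q / m - 1) := mul_le_mul_of_nonneg_left h1 hm
  have h3 : m * (q / m - 1) = q - m := by field_simp
  rw [h3] at h2
  nlinarith [mul_le_mul_of_nonneg_left h2 ht]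

theorem ent_subadd {β κ : Type} [Fintype β] [DecidableEq β] [Fintype κ] [DecidableEq κ]
    (σ : Matrix (β × κ) (β × κ) ℂ) (hσ : σ.PosSemidef) (ht : σ.trace = 1)
    (A : Matrix β β ℂ) (hA : A = Matrix.of fun b b' => ∑ k, σ (b, k) (b', k))
    (B : Matrix κ κ ℂ) (hB : B = Matrix.of fun k k' => ∑ b, σ (b, k) (b, k'))
    (hAp : A.PosSemidef) (hBp : B.PosSemidef) :
    vonNeumannEntropy σ ≤ vonNeumannEntropy A + vonNeumannEntropy B := by
  have htA : A.trace = 1 := by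
    rw [← ht, hA]; simp [Matrix.trace, Fintype.sum_prod_type]
  have htB : B.trace = 1 := by
    rw [← ht, hB]; simp only [Matrix.trace, Fintype.sum_prod_type, diag_apply, of_apply]
    rw [Finset.sum_comm]
  have sσ := sum_eig hσ.1 ht
  have sA := sum_eig hAp.1 htA
  have sB := sum_eig hBp.1 htB
  rw [ent_of_herm hσ.1, ent_of_herm hAp.1, ent_of_herm hBp.1]
  obtain ⟨Q, hQ1, hQ2, hQ⟩ := spec_decomp hσ.1
  obtain ⟨U, hU1, hU2, hU⟩ := spec_decomp hAp.1
  obtain ⟨V, hV1, hV2, hV⟩ := spec_decomp hBp.1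
  have pm := hσ.eigenvalues_nonneg
  have pq := hAp.eigenvalues_nonneg
  have pr := hBp.eigenvalues_nonneg
  set μ := hσ.1.eigenvalues
  set q := hAp.1.eigenvalues
  set r := hBp.1.eigenvalues
  set W := kroneckerMap (· * ·) U V with hWdef
  have hW2 : W * Wᴴ = 1 := by
    rw [hWdef]
    show (kroneckerMap (· * ·) U V) * (kroneckerMap (· * ·) U V)ᴴ = 1
    rw [conjTranspose_kronecker, ← mul_kronecker_mul, hU2, hV2, one_kronecker_one]
  have hW1 : Wᴴ * W = 1 := by
    rw [hWdef]
    show (kroneckerMap (· * ·) U V)ᴴ * (kroneckerMap (· * ·) U V) = 1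
    rw [conjTranspose_kronecker, ← mul_kronecker_mul, hU1, hV1, one_kronecker_one]
  set Z := Wᴴ * Q with hZdef
  have hZ1 : Zᴴ * Z = 1 := by
    rw [hZdef, conjTranspose_mul, conjTranspose_conjTranspose]
    calc Qᴴ * W * (Wᴴ * Q) = Qᴴ * (W * Wᴴ) * Q := by simp only [Matrix.mul_assoc]
      _ = 1 := by rw [hW2, Matrix.mul_one, hQ1]
  have hZ2 : Z * Zᴴ = 1 := by
    rw [hZdef, conjTranspose_mul, conjTranspose_conjTranspose]
    calc Wᴴ * Q * (Qᴴ * W) = Wᴴ * (Q * Qᴴ) * W := by simp only [Matrix.mul_assoc]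
      _ = 1 := by rw [hQ2, Matrix.mul_one, hW1]
  let t : β × κ → β × κ → ℝ := fun x k => Complex.normSq (Z x k)
  have tn : ∀ x k, 0 ≤ t x k := fun x k => Complex.normSq_nonneg _
  have trow : ∀ x, ∑ k, t x k = 1 := by
    intro x
    have := congrFun (congrFun hZ2 x) x
    simp only [Matrix.mul_apply, conjTranspose_apply, Complex.star_def, Complex.mul_conj,
      one_apply_eq] at this
    exact_mod_cast this
  have tcol : ∀ k, ∑ x, t x k = 1 := by
    intro k
    have := congrFun (congrFun hZ1 k) k
    simp only [Matrix.mul_apply, conjTranspose_apply, Complex.star_def, mul_comm, Complex.mul_conj,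
      one_apply_eq] at this
    exact_mod_cast this
  have hDz : Wᴴ * σ * W = Z * diagonal (fun k => (μ k : ℂ)) * Zᴴ := by
    rw [hZdef, conjTranspose_mul, conjTranspose_conjTranspose]
    conv_lhs => rw [hQ]
    simp only [Matrix.mul_assoc]
  let p : β × κ → ℝ := fun x => ∑ k, t x k * μ k
  have hD : ∀ x, (Wᴴ * σ * W) x x = (p x : ℂ) := by
    intro x
    rw [hDz, Matrix.mul_apply]
    simp only [mul_diagonal, conjTranspose_apply, Complex.star_def, p, t]
    push_cast
    refine Finset.sum_congr rfl fun k _ => ?_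
    rw [← Complex.mul_conj]; ring
  have pn : ∀ x, 0 ≤ p x := fun x => Finset.sum_nonneg fun k _ => mul_nonneg (tn x k) (pm k)
  have mA : ∀ j, ∑ l, p (j, l) = q j := by
    intro j
    have h1 := marg_left σ A U V hV2 hA j
    have h2 : Uᴴ * A * U = diagonal (fun k => (q k : ℂ)) := by
      conv_lhs => rw [hU]
      simp only [Matrix.mul_assoc, hU1, Matrix.mul_one]
      rw [← Matrix.mul_assoc, hU1, Matrix.one_mul]
    rw [h2, diagonal_apply_eq] at h1
    have h3 : ∑ l, ((p (j, l) : ℝ) : ℂ) = (q j : ℂ) := by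
      rw [← h1]; exact Finset.sum_congr rfl fun l _ => (hD (j, l)).symm
    exact_mod_cast h3
  have mB : ∀ l, ∑ j, p (j, l) = r l := by
    intro l
    have h1 := marg_right σ B V U hU2 hB l
    have h2 : Vᴴ * B * V = diagonal (fun k => (r k : ℂ)) := by
      conv_lhs => rw [hV]
      simp only [Matrix.mul_assoc, hV1, Matrix.mul_one]
      rw [← Matrix.mul_assoc, hV1, Matrix.one_mul]
    rw [h2, diagonal_apply_eq] at h1
    have h3 : ∑ j, ((p (j, l) : ℝ) : ℂ) = (r l : ℂ) := by
      rw [← h1]; exact Finset.sum_congr rfl fun j _ => (hD (j, l)).symm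
    exact_mod_cast h3
  have pq0 : ∀ x : β × κ, q x.1 = 0 → p x = 0 := by
    intro x hx
    have h1 := mA x.1
    rw [hx] at h1
    exact (Finset.sum_eq_zero_iff_of_nonneg (fun l _ => pn (x.1, l))).1 h1 x.2 (Finset.mem_univ _)
  have pr0 : ∀ x : β × κ, r x.2 = 0 → p x = 0 := by
    intro x hx
    have h1 := mB x.2
    rw [hx] at h1
    exact (Finset.sum_eq_zero_iff_of_nonneg (fun j _ => pn (j, x.2))).1 h1 x.1 (Finset.mem_univ _)
  have tz : ∀ x k, p x = 0 → t x k * μ k = 0 := by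
    intro x k hx
    exact (Finset.sum_eq_zero_iff_of_nonneg
      (fun k _ => mul_nonneg (tn x k) (pm k))).1 hx k (Finset.mem_univ _)
  -- Klein
  have K : ∑ x, ∑ k, (t x k * μ k - t x k * (q x.1 * r x.2)) ≤
      ∑ x, ∑ k, (t x k * μ k * Real.log (μ k) - t x k * μ k * Real.log (q x.1 * r x.2)) := by
    refine Finset.sum_le_sum fun x _ => Finset.sum_le_sum fun k _ => ?_
    refine klein_scalar _ _ _ (tn x k) (pm k) (mul_nonneg (pq _) (pr _)) fun h0 => ?_
    rcases mul_eq_zero.1 h0 with h | h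
    · exact tz x k (pq0 x h)
    · exact tz x k (pr0 x h)
  have L1 : ∑ x, ∑ k, t x k * μ k = 1 := by
    rw [Finset.sum_comm]
    simp_rw [← Finset.sum_mul, tcol, one_mul]
    exact sσ
  have L2 : ∑ x : β × κ, ∑ k, t x k * (q x.1 * r x.2) = 1 := by
    simp_rw [← Finset.sum_mul, trow, one_mul]
    rw [Fintype.sum_prod_type]
    simp_rw [← Finset.mul_sum, sB, mul_one]
    exact sA
  have L3 : ∑ x, ∑ k, t x k * μ k * Real.log (μ k) = ∑ k, μ k * Real.log (μ k) := by
    rw [Finset.sum_comm]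
    refine Finset.sum_congr rfl fun k _ => ?_
    simp_rw [mul_assoc]
    rw [← Finset.sum_mul, tcol, one_mul]
  have L4 : ∑ x, ∑ k, t x k * μ k * Real.log (q x.1 * r x.2)
      = ∑ j, q j * Real.log (q j) + ∑ l, r l * Real.log (r l) := by
    have e1 : ∀ x : β × κ, ∑ k, t x k * μ k * Real.log (q x.1 * r x.2)
        = p x * Real.log (q x.1) + p x * Real.log (r x.2) := by
      intro x
      rw [← Finset.sum_mul]
      show p x * _ = _
      by_cases h1 : q x.1 = 0
      · simp [pq0 x h1]
      by_cases h2 : r x.2 = 0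
      · simp [pr0 x h2]
      rw [Real.log_mul h1 h2]; ring
    simp_rw [e1]
    rw [Finset.sum_add_distrib]
    congr 1
    · rw [Fintype.sum_prod_type]
      refine Finset.sum_congr rfl fun j _ => ?_
      dsimp only
      rw [← Finset.sum_mul, mA]
    · rw [Fintype.sum_prod_type, Finset.sum_comm]
      refine Finset.sum_congr rfl fun l _ => ?_
      dsimp only
      rw [← Finset.sum_mul, mB]
  simp only [Finset.sum_sub_distrib] at K
  rw [L1, L2, L3, L4] at K
  have hl : 0 < Real.log 2 := Real.log_pos (by norm_num)
  have conv : ∀ {ι : Type} [Fintype ι] (f : ι → ℝ), ∑ k, -(f k * Real.logb 2 (f k))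
      = -(∑ k, f k * Real.log (f k)) / Real.log 2 := by
    intro ι _ f
    rw [Finset.sum_neg_distrib, neg_div, Finset.sum_div]
    simp only [Real.logb, mul_div_assoc]
  rw [conv, conv, conv, ← add_div]
  exact div_le_div_of_nonneg_right (by linarith) hl.le

/-! ### Araki-Lieb -/

theorem araki_lieb {α β γ : Type} [Fintype α] [DecidableEq α] [Fintype β] [DecidableEq β]
    [Fintype γ] [DecidableEq γ] (e : α × β ≃ γ) (ρ : Matrix γ γ ℂ) (hρ : ρ.PosSemidef)
    (ht : ρ.trace = 1)
    (A : Matrix α α ℂ) (hA : A = Matrix.of fun a a' => ∑ b, ρ (e (a, b)) (e (a', b)))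
    (B : Matrix β β ℂ) (hB : B = Matrix.of fun b b' => ∑ a, ρ (e (a, b)) (e (a, b')))
    (hBp : B.PosSemidef) :
    vonNeumannEntropy A ≤ vonNeumannEntropy ρ + vonNeumannEntropy B := by
  obtain ⟨R, hR⟩ := psd_factor hρ
  let Y : Matrix α (β × γ) ℂ := Matrix.of fun a x => R (e (a, x.1)) x.2
  have hAY : A = Y * Yᴴ := by
    rw [hA, hR]; ext a a'
    simp [Matrix.mul_apply, Y, Fintype.sum_prod_type]
  have hYp : ((Yᴴ * Y)ᵀ).PosSemidef := (posSemidef_conjTranspose_mul_self Y).transpose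
  have hRp : ((Rᴴ * R)ᵀ).PosSemidef := (posSemidef_conjTranspose_mul_self R).transpose
  have htY : ((Yᴴ * Y)ᵀ).trace = 1 := by
    rw [trace_transpose, trace_mul_comm, ← hAY, hA, ← ht]
    simp only [Matrix.trace, diag_apply, of_apply]
    rw [← e.sum_comp, Fintype.sum_prod_type]
  have key := ent_subadd (Yᴴ * Y)ᵀ hYp htY B ?_ (Rᴴ * R)ᵀ ?_ hBp hRp
  · rw [ent_transpose (isHermitian_conjTranspose_mul_self _),
      ent_transpose (isHermitian_conjTranspose_mul_self _), ← ent_mul_comm, ← ent_mul_comm,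
      ← hAY, ← hR] at key
    linarith
  · rw [hB, hR]; ext b b'
    simp only [Matrix.mul_apply, Y, of_apply, transpose_apply, conjTranspose_apply]
    rw [Finset.sum_comm]
    exact Finset.sum_congr rfl fun k _ => Finset.sum_congr rfl fun a _ => mul_comm _ _
  · ext k k'
    simp only [Matrix.mul_apply, Y, of_apply, transpose_apply, conjTranspose_apply]
    rw [← e.sum_comp, Fintype.sum_prod_type, Finset.sum_comm]

/-! ### Reduced states -/

/-- Gluing as an equivalence. -/
def glueEquiv {n : ℕ} {d : Fin n → ℕ} (I : Finset (Fin n)) :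
    ((∀ i : I, Fin (d i.1)) × (∀ i : (Iᶜ : Finset (Fin n)), Fin (d i.1))) ≃
      (∀ i : Fin n, Fin (d i)) where
  toFun p := glueAssignment I p.1 p.2
  invFun x := (fun i => x i.1, fun i => x i.1)
  left_inv p := by
    ext i
    · simp [glueAssignment]
    · have := Finset.mem_compl.1 i.2
      simp [glueAssignment, this]
  right_inv x := by
    funext i
    simp [glueAssignment]

theorem red_psd {n : ℕ} {d : Fin n → ℕ} {ρ : Matrix (∀ i, Fin (d i)) (∀ i, Fin (d i)) ℂ}
    (h : ρ.PosSemidef) (I : Finset (Fin n)) : (reducedState ρ I).PosSemidef := by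
  have : reducedState ρ I = ∑ c : ∀ i : (Iᶜ : Finset (Fin n)), Fin (d i.1),
      ρ.submatrix (fun a => glueAssignment I a c) (fun a => glueAssignment I a c) := by
    ext a b
    simp [reducedState, Matrix.sum_apply]
  rw [this]
  exact posSemidef_sum _ fun c _ => h.submatrix _

theorem red_trace {n : ℕ} {d : Fin n → ℕ} (ρ : Matrix (∀ i, Fin (d i)) (∀ i, Fin (d i)) ℂ)
    (I : Finset (Fin n)) : (reducedState ρ I).trace = ρ.trace := by
  simp only [Matrix.trace, diag_apply, reducedState]
  rw [← (glueEquiv I).sum_comp, Fintype.sum_prod_type]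
  rfl

theorem red_apply {n : ℕ} {d : Fin n → ℕ} (ρ : Matrix (∀ i, Fin (d i)) (∀ i, Fin (d i)) ℂ)
    (I : Finset (Fin n)) (u v : ∀ i : I, Fin (d i.1)) :
    reducedState ρ I u v = ∑ x, ∑ y, if (fun i : I => x i.1) = u ∧ (fun i : I => y i.1) = v ∧
      (∀ i, i ∉ I → x i = y i) then ρ x y else 0 := by
  rw [← (glueEquiv I).sum_comp]
  simp_rw [← (glueEquiv I).sum_comp (fun y => ite _ _ _)]
  have key : ∀ (p q : (∀ i : I, Fin (d i.1)) × (∀ i : (Iᶜ : Finset (Fin n)), Fin (d i.1))),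
      ((fun i : I => glueEquiv I p i.1) = u ∧ (fun i : I => glueEquiv I q i.1) = v ∧
      (∀ i, i ∉ I → glueEquiv I p i = glueEquiv I q i)) ↔ (p.1 = u ∧ q.1 = v ∧ p.2 = q.2) := by
    intro p q
    have h1 : ∀ p, (fun i : I => glueEquiv (d := d) I p i.1) = p.1 := by
      intro p; funext i; simp [glueEquiv, glueAssignment]
    rw [h1, h1]
    refine and_congr_right fun _ => and_congr_right fun _ => ?_
    constructor
    · intro h; funext i
      have hi := Finset.mem_compl.1 i.2
      simpa [glueEquiv, glueAssignment, hi] using h i.1 hi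
    · intro h i hi
      simp [glueEquiv, glueAssignment, hi, h]
  simp_rw [key, Fintype.sum_prod_type]
  simp only [ite_and, Finset.sum_ite_eq, Finset.sum_ite_irrel, Finset.sum_const_zero,
    Finset.mem_univ, if_true, Finset.sum_ite_eq']
  unfold reducedState
  refine Finset.sum_congr rfl fun c _ => ?_
  rw [Finset.sum_comm]
  simp only [Finset.sum_ite_eq', Finset.sum_ite_eq, Finset.mem_univ, if_true]
  rfl

/-- Join assignments on disjoint sets. -/
def joinEquiv {n : ℕ} {d : Fin n → ℕ} (J K : Finset (Fin n)) (h : Disjoint J K) :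
    ((∀ i : J, Fin (d i.1)) × (∀ i : K, Fin (d i.1))) ≃
      (∀ i : (J ∪ K : Finset (Fin n)), Fin (d i.1)) where
  toFun p := fun i => if h : i.1 ∈ J then p.1 ⟨i.1, h⟩ else
    p.2 ⟨i.1, (Finset.mem_union.1 i.2).resolve_left h⟩
  invFun x := (fun i => x ⟨i.1, Finset.mem_union_left _ i.2⟩,
    fun i => x ⟨i.1, Finset.mem_union_right _ i.2⟩)
  left_inv p := by
    ext i
    · simp
    · have : i.1 ∉ J := fun hi => Finset.disjoint_left.1 h hi i.2
      simp [this]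
  right_inv x := by
    funext i
    simp

theorem join_eq_iff {n : ℕ} {d : Fin n → ℕ} (J K : Finset (Fin n)) (h : Disjoint J K)
    (x : ∀ i, Fin (d i)) (a : ∀ i : J, Fin (d i.1)) (b : ∀ i : K, Fin (d i.1)) :
    (fun i : (J ∪ K : Finset (Fin n)) => x i.1) = joinEquiv J K h (a, b) ↔
      (fun i : J => x i.1) = a ∧ (fun i : K => x i.1) = b := by
  rw [← Equiv.symm_apply_eq, Prod.ext_iff]
  rfl

theorem red_left {n : ℕ} {d : Fin n → ℕ} (ρ : Matrix (∀ i, Fin (d i)) (∀ i, Fin (d i)) ℂ)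
    (J K : Finset (Fin n)) (h : Disjoint J K) : reducedState ρ J = Matrix.of fun a a' =>
      ∑ b, reducedState ρ (J ∪ K) (joinEquiv J K h (a, b)) (joinEquiv J K h (a', b)) := by
  ext a a'
  simp only [Matrix.of_apply, red_apply, join_eq_iff]
  conv_rhs => rw [Finset.sum_comm]
  refine Finset.sum_congr rfl fun x _ => ?_
  conv_rhs => rw [Finset.sum_comm]
  refine Finset.sum_congr rfl fun y _ => ?_
  have : ∀ b : (∀ i : K, Fin (d i.1)), (((fun i : J => x i.1) = a ∧ (fun i : K => x i.1) = b) ∧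
      ((fun i : J => y i.1) = a' ∧ (fun i : K => y i.1) = b) ∧ ∀ i, i ∉ J ∪ K → x i = y i) ↔
      ((fun i : K => x i.1) = b ∧ ((fun i : J => x i.1) = a ∧ (fun i : J => y i.1) = a' ∧
        (∀ i, i ∉ J → x i = y i))) := by
    intro b
    constructor
    · rintro ⟨⟨h1, h2⟩, ⟨h3, h4⟩, h5⟩
      refine ⟨h2, h1, h3, fun i hi => ?_⟩
      by_cases hk : i ∈ K
      · exact congrFun (h2.trans h4.symm) ⟨i, hk⟩
      · exact h5 i (by simp [hi, hk])
    · rintro ⟨h2, h1, h3, h5⟩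
      refine ⟨⟨h1, h2⟩, ⟨h3, ?_⟩, fun i hi => h5 i fun hj => hi (Finset.mem_union_left _ hj)⟩
      rw [← h2]; funext i
      exact (h5 i.1 fun hj => Finset.disjoint_left.1 h hj i.2).symm
  simp only [this]
  by_cases hP : ((fun i : J => x i.1) = a ∧ (fun i : J => y i.1) = a' ∧
        (∀ i, i ∉ J → x i = y i))
  · rw [if_pos hP, Finset.sum_eq_single (fun i : K => x i.1), if_pos ⟨rfl, hP⟩]
    · exact fun b _ hb => if_neg fun hh => hb hh.1.symm
    · simp
  · simp only [hP, and_false, if_false, Finset.sum_const_zero]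

theorem red_right {n : ℕ} {d : Fin n → ℕ} (ρ : Matrix (∀ i, Fin (d i)) (∀ i, Fin (d i)) ℂ)
    (J K : Finset (Fin n)) (h : Disjoint J K) : reducedState ρ K = Matrix.of fun b b' =>
      ∑ a, reducedState ρ (J ∪ K) (joinEquiv J K h (a, b)) (joinEquiv J K h (a, b')) := by
  rw [red_left ρ K J h.symm]
  ext b b'
  simp only [Matrix.of_apply, red_apply, join_eq_iff]
  simp only [Finset.union_comm K J]
  refine Finset.sum_congr rfl fun a _ => Finset.sum_congr rfl fun x _ =>
    Finset.sum_congr rfl fun y _ => if_congr ?_ rfl rfl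
  tauto

theorem region_nonneg {n : ℕ} {v : Finset (Fin n) → ℝ} (hv : v ∈ quantumEntropyRegion n)
    (I : Finset (Fin n)) : 0 ≤ v I := by
  obtain ⟨d, hd, ρ, hρ, ht, rfl⟩ := hv
  exact ent_nonneg (red_psd hρ I) ((red_trace ρ I).trans ht)

theorem region_araki_lieb {n : ℕ} {v : Finset (Fin n) → ℝ} (hv : v ∈ quantumEntropyRegion n)
    (J K : Finset (Fin n)) (h : Disjoint J K) : v J ≤ v (J ∪ K) + v K := by
  obtain ⟨d, hd, ρ, hρ, ht, rfl⟩ := hv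
  exact araki_lieb (joinEquiv J K h) (reducedState ρ (J ∪ K)) (red_psd hρ _)
    ((red_trace ρ _).trans ht) _ (red_left ρ J K h) _ (red_right ρ J K h) (red_psd hρ _)

/-! ### Explicit states -/

/-- The mixed state obtained by tracing out the register `E` from the uniform superposition
of `|φ ω⟩ ⊗ |η ω⟩`. -/
noncomputable def pState {X Ω E : Type} [Fintype X] [DecidableEq X] [Fintype Ω] [Fintype E]
    [DecidableEq E] (φ : Ω → X) (η : Ω → E) : Matrix X X ℂ :=
  ((Fintype.card Ω : ℝ)⁻¹ : ℂ) • ((∑ ω, Matrix.single (φ ω) (η ω) (1 : ℂ)) *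
    (∑ ω, Matrix.single (φ ω) (η ω) (1 : ℂ))ᴴ)

section states
variable {X Ω E : Type} [Fintype X] [DecidableEq X] [Fintype Ω] [DecidableEq Ω] [Fintype E]
    [DecidableEq E]

theorem pState_psd (φ : Ω → X) (η : Ω → E) : (pState φ η).PosSemidef := by
  unfold pState
  refine (posSemidef_self_mul_conjTranspose _).smul ?_
  rw [← Complex.ofReal_inv]
  exact_mod_cast (inv_nonneg.2 (Nat.cast_nonneg _) : (0 : ℝ) ≤ (Fintype.card Ω : ℝ)⁻¹)

theorem pState_eq (φ : Ω → X) (η : Ω → E) : pState φ η = ((Fintype.card Ω : ℝ)⁻¹ : ℂ) •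
    ∑ ω, ∑ ω', if η ω = η ω' then Matrix.single (φ ω) (φ ω') (1 : ℂ) else 0 := by
  unfold pState
  congr 1
  rw [conjTranspose_sum, Matrix.sum_mul]
  refine Finset.sum_congr rfl fun ω _ => ?_
  rw [Matrix.mul_sum]
  refine Finset.sum_congr rfl fun ω' _ => ?_
  rw [conjTranspose_single, star_one]
  split_ifs with h
  · rw [h, single_mul_single_same, one_mul]
  · rw [single_mul_single_of_ne _ _ _ _ h]

theorem pState_trace [Nonempty Ω] (φ : Ω → X) (η : Ω → E)
    (h : ∀ ω ω', η ω = η ω' → φ ω = φ ω' → ω = ω') : (pState φ η).trace = 1 := by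
  rw [pState_eq, trace_smul, trace_sum]
  have : ∀ ω, (∑ ω', if η ω = η ω' then Matrix.single (φ ω) (φ ω') (1 : ℂ) else 0).trace = 1 := by
    intro ω
    rw [trace_sum, Finset.sum_eq_single ω]
    · simp
    · intro ω' _ hne
      split_ifs with he
      · exact trace_single_eq_of_ne _ _ _ fun hp => hne (h _ _ he hp).symm
      · simp
    · simp
  simp [this]

theorem ent_classical {M : Matrix X X ℂ} (hM : M.IsHermitian) (ht : M.trace = 1) (g : Ω → X)
    (hg : M = ((Fintype.card Ω : ℝ)⁻¹ : ℂ) • ∑ ω, Matrix.single (g ω) (g ω) (1 : ℂ)) (m : ℕ)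
    (hm : ∀ ω, (Finset.univ.filter fun ω' => g ω = g ω').card = m) :
    vonNeumannEntropy M = -Real.logb 2 ((m : ℝ) * (Fintype.card Ω : ℝ)⁻¹) := by
  refine ent_flat hM ht _ ?_
  have : (∑ ω, Matrix.single (g ω) (g ω) (1 : ℂ)) * (∑ ω, Matrix.single (g ω) (g ω) (1 : ℂ))
      = (m : ℂ) • ∑ ω, Matrix.single (g ω) (g ω) (1 : ℂ) := by
    rw [Finset.sum_mul, Finset.smul_sum]
    refine Finset.sum_congr rfl fun ω _ => ?_
    rw [Finset.mul_sum]
    have : ∀ ω', Matrix.single (g ω) (g ω) (1 : ℂ) * Matrix.single (g ω') (g ω') (1 : ℂ)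
        = if g ω = g ω' then Matrix.single (g ω) (g ω) (1 : ℂ) else 0 := by
      intro ω'
      split_ifs with h
      · rw [← h, single_mul_single_same, one_mul]
      · rw [single_mul_single_of_ne _ _ _ _ h]
    simp_rw [this]
    rw [← Finset.sum_filter, Finset.sum_const, hm, Nat.cast_smul_eq_nsmul]
  rw [hg, Matrix.smul_mul, Matrix.mul_smul, this]
  simp only [smul_smul]
  push_cast
  congr 1
  ring

theorem ent_pure [Nonempty Ω] {M : Matrix X X ℂ} (hM : M.IsHermitian) (ht : M.trace = 1)
    (g : Ω → X) (hi : Function.Injective g)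
    (hg : M = ((Fintype.card Ω : ℝ)⁻¹ : ℂ) • ∑ ω, ∑ ω', Matrix.single (g ω) (g ω') (1 : ℂ)) :
    vonNeumannEntropy M = 0 := by
  have h := ent_flat hM ht 1 ?_
  · simpa using h
  have : (∑ ω, ∑ ω', Matrix.single (g ω) (g ω') (1 : ℂ)) *
      (∑ ω, ∑ ω', Matrix.single (g ω) (g ω') (1 : ℂ))
      = (Fintype.card Ω : ℂ) • ∑ ω, ∑ ω', Matrix.single (g ω) (g ω') (1 : ℂ) := by
    rw [Finset.sum_mul, Finset.smul_sum]
    refine Finset.sum_congr rfl fun ω _ => ?_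
    rw [Finset.sum_mul]
    have h1 : ∀ ω', Matrix.single (g ω) (g ω') (1 : ℂ) *
        (∑ ω, ∑ ω', Matrix.single (g ω) (g ω') (1 : ℂ)) = ∑ ω'', Matrix.single (g ω) (g ω'') 1 := by
      intro ω'
      rw [Finset.mul_sum, Finset.sum_eq_single ω']
      · rw [Finset.mul_sum]
        simp
      · intro b _ hb
        rw [Finset.mul_sum]
        refine Finset.sum_eq_zero fun c _ => ?_
        rw [single_mul_single_of_ne _ _ _ _ fun hh => hb (hi hh).symm]
      · simp
    simp_rw [h1]
    rw [Finset.sum_const, Finset.card_univ, Nat.cast_smul_eq_nsmul]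
  rw [hg, Matrix.smul_mul, Matrix.mul_smul, this]
  simp only [smul_smul]
  push_cast
  congr 1
  field_simp

end states

theorem red_single {n : ℕ} {d : Fin n → ℕ} (I : Finset (Fin n)) (x y : ∀ i, Fin (d i)) :
    reducedState (Matrix.single x y (1 : ℂ)) I = if (∀ i, i ∉ I → x i = y i) then
      Matrix.single (fun i : I => x i.1) (fun i : I => y i.1) 1 else 0 := by
  ext u v
  rw [red_apply, Finset.sum_eq_single x, Finset.sum_eq_single y]
  · by_cases h : ∀ i, i ∉ I → x i = y i
    · rw [if_pos h, Matrix.single_apply, Matrix.single_apply]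
      simp only [and_self, if_true]
      exact if_congr (by tauto) rfl rfl
    · rw [if_neg h, if_neg (by tauto)]; rfl
  · intro b _ hb
    simp [Matrix.single_apply, hb.symm]
  · simp
  · intro b _ hb
    simp [Matrix.single_apply, hb.symm]
  · simp

theorem red_pState {n : ℕ} {d : Fin n → ℕ} {Ω E : Type} [Fintype Ω] [DecidableEq Ω]
    [Fintype E] [DecidableEq E] (φ : Ω → ∀ i, Fin (d i)) (η : Ω → E) (I : Finset (Fin n)) :
    reducedState (pState φ η) I = ((Fintype.card Ω : ℝ)⁻¹ : ℂ) •
      ∑ ω, ∑ ω', if η ω = η ω' ∧ (∀ i, i ∉ I → φ ω i = φ ω' i) then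
        Matrix.single (fun i : I => φ ω i.1) (fun i : I => φ ω' i.1) (1 : ℂ) else 0 := by
  rw [pState_eq]
  ext u v
  have lin : ∀ (ω ω' : Ω), (if η ω = η ω' ∧ (∀ i, i ∉ I → φ ω i = φ ω' i) then
        Matrix.single (fun i : I => φ ω i.1) (fun i : I => φ ω' i.1) (1 : ℂ) else 0) =
      if η ω = η ω' then reducedState (Matrix.single (φ ω) (φ ω') (1 : ℂ)) I else 0 := by
    intro ω ω'
    rw [red_single, ite_and]
  simp_rw [lin]
  simp only [Matrix.smul_apply, Matrix.sum_apply, reducedState, smul_eq_mul]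
  rw [← Finset.mul_sum]
  congr 1
  rw [Finset.sum_comm]
  refine Finset.sum_congr rfl fun ω _ => ?_
  rw [Finset.sum_comm]
  refine Finset.sum_congr rfl fun ω' _ => ?_
  split_ifs <;> simp [reducedState]

theorem pState_mem {n : ℕ} {d : Fin n → ℕ} (hd : ∀ i, 1 ≤ d i) {Ω E : Type} [Fintype Ω]
    [DecidableEq Ω] [Nonempty Ω]
    [Fintype E] [DecidableEq E] (φ : Ω → ∀ i, Fin (d i)) (η : Ω → E)
    (h : ∀ ω ω', η ω = η ω' → φ ω = φ ω' → ω = ω') :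
    qEntropyVector (pState φ η) ∈ quantumEntropyRegion n :=
  ⟨d, hd, pState φ η, pState_psd φ η, pState_trace φ η h, rfl⟩

/-- Entropies when the complement (together with the environment) determines `ω`. -/
theorem vec_classical {n : ℕ} {d : Fin n → ℕ} {Ω E : Type} [Fintype Ω]
    [DecidableEq Ω] [Nonempty Ω]
    [Fintype E] [DecidableEq E] (φ : Ω → ∀ i, Fin (d i)) (η : Ω → E)
    (h : ∀ ω ω', η ω = η ω' → φ ω = φ ω' → ω = ω') (I : Finset (Fin n))
    (hI : ∀ ω ω', η ω = η ω' → (∀ i, i ∉ I → φ ω i = φ ω' i) → ω = ω') (m : ℕ)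
    (hm : ∀ ω, (Finset.univ.filter fun ω' => ∀ i ∈ I, φ ω i = φ ω' i).card = m) :
    qEntropyVector (pState φ η) I = -Real.logb 2 ((m : ℝ) * (Fintype.card Ω : ℝ)⁻¹) := by
  refine ent_classical (red_psd (pState_psd φ η) I).1 ((red_trace _ I).trans (pState_trace φ η h))
    (fun ω (i : I) => φ ω i.1) ?_ m ?_
  · rw [red_pState]
    congr 1
    refine Finset.sum_congr rfl fun ω _ => ?_
    rw [Finset.sum_eq_single ω]
    · simp
    · intro b _ hb
      rw [if_neg]
      rintro ⟨h1, h2⟩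
      exact hb (hI _ _ h1 h2).symm
    · simp
  · intro ω
    rw [← hm ω]
    congr 1
    ext ω'
    simp [funext_iff]

theorem vec_pure {n : ℕ} {d : Fin n → ℕ} {Ω : Type} [Fintype Ω]
    [DecidableEq Ω] [Nonempty Ω] (φ : Ω → ∀ i, Fin (d i)) (I : Finset (Fin n))
    (hc : ∀ ω ω' i, i ∉ I → φ ω i = φ ω' i)
    (hI : ∀ ω ω', (∀ i ∈ I, φ ω i = φ ω' i) → ω = ω') :
    qEntropyVector (pState φ (fun _ => ())) I = 0 := by
  refine ent_pure (red_psd (pState_psd φ _) I).1 ((red_trace _ I).trans (pState_trace φ _ ?_))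
    (fun ω (i : I) => φ ω i.1) ?_ ?_
  · intro ω ω' _ h
    exact hI _ _ fun i _ => congrFun h i
  · intro ω ω' h
    exact hI _ _ fun i hi => congrFun h ⟨i, hi⟩
  · rw [red_pState]
    congr 1
    refine Finset.sum_congr rfl fun ω _ => Finset.sum_congr rfl fun ω' _ => ?_
    have hcc := hc ω ω'
    rw [if_pos (And.intro rfl hcc)]

/-! ### The three states -/

/-- XOR distribution. -/
def phiX (n : ℕ) (w : Fin 2 × Fin 2) : ∀ _ : Fin n, Fin 2 := fun i =>
  if i.1 = 0 then w.1 else if i.1 = 1 then w.2 else if i.1 = 2 then w.1 + w.2 else 0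

/-- Perfectly correlated bit on the first three systems. -/
def phiG (n : ℕ) (w : Fin 2) : ∀ _ : Fin n, Fin 2 := fun i => if i.1 < 3 then w else 0

theorem phiX_iff {n : ℕ} (hn : 3 ≤ n) (P : Fin n → Prop) (w w' : Fin 2 × Fin 2) :
    (∀ i, P i → phiX n w i = phiX n w' i) ↔
      (P ⟨0, by omega⟩ → w.1 = w'.1) ∧ (P ⟨1, by omega⟩ → w.2 = w'.2) ∧
      (P ⟨2, by omega⟩ → w.1 + w.2 = w'.1 + w'.2) := by
  constructor
  · intro h
    exact ⟨fun hp => by simpa [phiX] using h _ hp, fun hp => by simpa [phiX] using h _ hp,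
      fun hp => by simpa [phiX] using h _ hp⟩
  · rintro ⟨h0, h1, h2⟩ ⟨i, hi⟩ hp
    simp only [phiX]
    split_ifs with a b c
    · subst a; exact h0 hp
    · subst b; exact h1 hp
    · subst c; exact h2 hp
    · rfl

theorem phiG_iff {n : ℕ} (hn : 3 ≤ n) (P : Fin n → Prop) (w w' : Fin 2) :
    (∀ i, P i → phiG n w i = phiG n w' i) ↔
      ((P ⟨0, by omega⟩ ∨ P ⟨1, by omega⟩ ∨ P ⟨2, by omega⟩) → w = w') := by
  constructor
  · rintro h (hp | hp | hp)
    · simpa [phiG] using h _ hp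
    · simpa [phiG] using h _ hp
    · simpa [phiG] using h _ hp
  · rintro h ⟨i, hi⟩ hp
    simp only [phiG]
    split_ifs with a
    · apply h
      have : i = 0 ∨ i = 1 ∨ i = 2 := by omega
      rcases this with rfl | rfl | rfl
      · exact Or.inl hp
      · exact Or.inr (Or.inl hp)
      · exact Or.inr (Or.inr hp)
    · rfl

/-- Entropy vector of the XOR state. -/
noncomputable def vecX (n : ℕ) : Finset (Fin n) → ℝ :=
  qEntropyVector (d := fun _ : Fin n => 2) (pState (phiX n) (id : Fin 2 × Fin 2 → _))

/-- Entropy vector of the classical GHZ state. -/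
noncomputable def vecG (n : ℕ) : Finset (Fin n) → ℝ :=
  qEntropyVector (d := fun _ : Fin n => 2) (pState (phiG n) (id : Fin 2 → _))

/-- Entropy vector of the GHZ state. -/
noncomputable def vecT (n : ℕ) : Finset (Fin n) → ℝ :=
  qEntropyVector (d := fun _ : Fin n => 2) (pState (phiG n) (fun _ : Fin 2 => ()))

theorem phiG_inj {n : ℕ} (hn : 3 ≤ n) (w w' : Fin 2) (h : phiG n w = phiG n w') : w = w' := by
  have := congrFun h ⟨0, by omega⟩
  simpa [phiG] using this

theorem vecX_mem (n : ℕ) : vecX n ∈ quantumEntropyRegion n :=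
  pState_mem (d := fun _ : Fin n => 2) (fun _ => by norm_num) _ _ fun _ _ h _ => h

theorem vecG_mem (n : ℕ) : vecG n ∈ quantumEntropyRegion n :=
  pState_mem (d := fun _ : Fin n => 2) (fun _ => by norm_num) _ _ fun _ _ h _ => h

theorem vecT_mem (n : ℕ) (hn : 3 ≤ n) : vecT n ∈ quantumEntropyRegion n :=
  pState_mem (d := fun _ : Fin n => 2) (fun _ => by norm_num) _ _ fun _ _ _ h => phiG_inj hn _ _ h

theorem vecX_val {n : ℕ} (I : Finset (Fin n)) (m : ℕ)
    (hm : ∀ w, (Finset.univ.filter fun w' => ∀ i ∈ I, phiX n w i = phiX n w' i).card = m) :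
    vecX n I = -Real.logb 2 ((m : ℝ) * 4⁻¹) := by
  have := vec_classical (d := fun _ : Fin n => 2) (phiX n) (id : Fin 2 × Fin 2 → _)
    (fun _ _ h _ => h) I (fun _ _ h _ => h) m hm
  simpa [vecX] using this

theorem vecG_val {n : ℕ} (I : Finset (Fin n)) (m : ℕ)
    (hm : ∀ w, (Finset.univ.filter fun w' => ∀ i ∈ I, phiG n w i = phiG n w' i).card = m) :
    vecG n I = -Real.logb 2 ((m : ℝ) * 2⁻¹) := by
  have := vec_classical (d := fun _ : Fin n => 2) (phiG n) (id : Fin 2 → _)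
    (fun _ _ h _ => h) I (fun _ _ h _ => h) m hm
  simpa [vecG] using this

theorem lg1 : -Real.logb 2 (((1 : ℕ) : ℝ) * 4⁻¹) = 2 := by
  rw [show (((1 : ℕ) : ℝ) * 4⁻¹) = (2 : ℝ) ^ (-2 : ℝ) by
    rw [Real.rpow_neg (by norm_num)]; norm_num, Real.logb_rpow (by norm_num) (by norm_num)]
  norm_num

theorem lg2 : -Real.logb 2 (((2 : ℕ) : ℝ) * 4⁻¹) = 1 := by
  rw [show (((2 : ℕ) : ℝ) * 4⁻¹) = (2 : ℝ)⁻¹ by norm_num, Real.logb_inv]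
  simp

theorem lg4 : -Real.logb 2 (((4 : ℕ) : ℝ) * 4⁻¹) = 0 := by simp

theorem lh1 : -Real.logb 2 (((1 : ℕ) : ℝ) * 2⁻¹) = 1 := by
  rw [show (((1 : ℕ) : ℝ) * 2⁻¹) = (2 : ℝ)⁻¹ by norm_num, Real.logb_inv]
  simp

theorem lh2 : -Real.logb 2 (((2 : ℕ) : ℝ) * 2⁻¹) = 0 := by simp

theorem vecX_eq {n : ℕ} (hn : 3 ≤ n) (I : Finset (Fin n)) : vecX n I =
    if (⟨0, by omega⟩ : Fin n) ∈ I then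
      (if (⟨1, by omega⟩ : Fin n) ∈ I then 2 else if (⟨2, by omega⟩ : Fin n) ∈ I then 2 else 1)
    else if (⟨1, by omega⟩ : Fin n) ∈ I then (if (⟨2, by omega⟩ : Fin n) ∈ I then 2 else 1)
    else if (⟨2, by omega⟩ : Fin n) ∈ I then 1 else 0 := by
  have key := phiX_iff hn (fun i => i ∈ I)
  split_ifs with h0 h1 h2 h1 h2 h2
  · rw [vecX_val I 1, lg1]; simp only [key, h0, h1, true_imp_iff]
    by_cases h2 : (⟨2, by omega⟩ : Fin n) ∈ I
    · simp only [h2, true_imp_iff]; decide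
    · simp only [h2, false_imp_iff]; decide
  · rw [vecX_val I 1, lg1]; simp only [key, h0, h1, h2, true_imp_iff, false_imp_iff]; decide
  · rw [vecX_val I 2, lg2]; simp only [key, h0, h1, h2, true_imp_iff, false_imp_iff]; decide
  · rw [vecX_val I 1, lg1]; simp only [key, h0, h1, h2, true_imp_iff, false_imp_iff]; decide
  · rw [vecX_val I 2, lg2]; simp only [key, h0, h1, h2, true_imp_iff, false_imp_iff]; decide
  · rw [vecX_val I 2, lg2]; simp only [key, h0, h1, h2, true_imp_iff, false_imp_iff]; decide
  · rw [vecX_val I 4, lg4]; simp only [key, h0, h1, h2, false_imp_iff]; decide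

theorem vecG_eq {n : ℕ} (hn : 3 ≤ n) (I : Finset (Fin n)) : vecG n I =
    if ((⟨0, by omega⟩ : Fin n) ∈ I ∨ (⟨1, by omega⟩ : Fin n) ∈ I ∨ (⟨2, by omega⟩ : Fin n) ∈ I)
    then 1 else 0 := by
  have key := phiG_iff hn (fun i => i ∈ I)
  split_ifs with h
  · rw [vecG_val I 1, lh1]; simp only [key, h, true_imp_iff]; decide
  · rw [vecG_val I 2, lh2]; simp only [key, h, false_imp_iff]; decide

theorem vecT_eq {n : ℕ} (hn : 3 ≤ n) (I : Finset (Fin n)) : vecT n I =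
    if ((⟨0, by omega⟩ : Fin n) ∉ I ∨ (⟨1, by omega⟩ : Fin n) ∉ I ∨ (⟨2, by omega⟩ : Fin n) ∉ I)
    then vecG n I else 0 := by
  have key := phiG_iff hn (fun i => i ∈ I)
  have keyc := phiG_iff hn (fun i => i ∉ I)
  split_ifs with h
  · have hX : ∀ m, (∀ w, (Finset.univ.filter fun w' => ∀ i ∈ I, phiG n w i = phiG n w' i).card = m)
        → vecT n I = -Real.logb 2 ((m : ℝ) * 2⁻¹) := by
      intro m hm
      have := vec_classical (d := fun _ : Fin n => 2) (phiG n) (fun _ : Fin 2 => ())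
        (fun _ _ _ h => phiG_inj hn _ _ h) I (fun w w' _ hh => (keyc w w').1 hh h) m hm
      simpa [vecT] using this
    have hm : ∃ m, ∀ w, (Finset.univ.filter fun w' =>
        ∀ i ∈ I, phiG n w i = phiG n w' i).card = m := by
      by_cases h : ((⟨0, by omega⟩ : Fin n) ∈ I ∨ (⟨1, by omega⟩ : Fin n) ∈ I ∨
          (⟨2, by omega⟩ : Fin n) ∈ I)
      · refine ⟨1, ?_⟩; simp only [key, h, true_imp_iff]; decide
      · refine ⟨2, ?_⟩; simp only [key, h, false_imp_iff]; decide
    obtain ⟨m, hm⟩ := hm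
    rw [hX m hm, vecG_val I m hm]
  · refine vec_pure (d := fun _ : Fin n => 2) (phiG n) I ?_ ?_
    · intro w w'
      exact (keyc w w').2 fun hh => absurd hh h
    · intro w w' hh
      exact (key w w').1 hh (by tauto)

theorem vec_identity {n : ℕ} (hn : 3 ≤ n) (I : Finset (Fin n)) :
    vecX n I + vecG n I = vecT n I + (if (⟨0, by omega⟩ : Fin n) ∈ I then 1 else 0)
      + (if (⟨1, by omega⟩ : Fin n) ∈ I then 1 else 0)
      + (if (⟨2, by omega⟩ : Fin n) ∈ I then 1 else 0) := by
  rw [vecT_eq hn, vecG_eq hn, vecX_eq hn]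
  by_cases h0 : (⟨0, by omega⟩ : Fin n) ∈ I <;> by_cases h1 : (⟨1, by omega⟩ : Fin n) ∈ I <;>
    by_cases h2 : (⟨2, by omega⟩ : Fin n) ∈ I <;> simp [h0, h1, h2] <;> norm_num

/-! ### Linear algebra -/

theorem pairing_add {n : ℕ} (f g v : Finset (Fin n) → ℝ) :
    entPairing (f + g) v = entPairing f v + entPairing g v := by
  simp [entPairing, add_mul, Finset.sum_add_distrib]

theorem pairing_sub {n : ℕ} (f g v : Finset (Fin n) → ℝ) :
    entPairing (f - g) v = entPairing f v - entPairing g v := by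
  simp [entPairing, sub_mul, Finset.sum_sub_distrib]

theorem pairing_smul {n : ℕ} (t : ℝ) (f v : Finset (Fin n) → ℝ) :
    entPairing (t • f) v = t * entPairing f v := by
  simp [entPairing, mul_assoc, Finset.mul_sum]

theorem pairing_single {n : ℕ} (I : Finset (Fin n)) (v : Finset (Fin n) → ℝ) :
    entPairing (Pi.single I 1) v = v I := by
  simp [entPairing, Pi.single_apply]

theorem dual_of_region {n : ℕ} {f : Finset (Fin n) → ℝ}
    (h : ∀ v ∈ quantumEntropyRegion n, 0 ≤ entPairing f v) :
    f ∈ dualCone (closure (quantumEntropyRegion n)) := by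
  have hc : IsClosed {v : Finset (Fin n) → ℝ | 0 ≤ entPairing f v} := by
    refine isClosed_le continuous_const ?_
    unfold entPairing
    fun_prop
  exact fun v hv => closure_minimal h hc hv

/-- Weight of a functional at system `i`. -/
noncomputable def wt {n : ℕ} (i : Fin n) (f : Finset (Fin n) → ℝ) : ℝ :=
  entPairing f (fun I => if i ∈ I then 1 else 0)

theorem wt_single {n : ℕ} (i : Fin n) (I : Finset (Fin n)) :
    wt i (Pi.single I 1) = if i ∈ I then 1 else 0 := pairing_single _ _

theorem mem_balanced {n : ℕ} (f : Finset (Fin n) → ℝ) :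
    f ∈ balancedSubspace n ↔ ∀ i, wt i f = 0 := by
  show (∀ i : Fin n, ∑ I ∈ Finset.univ.filter (fun I => i ∈ I), f I = 0) ↔ _
  refine forall_congr' fun i => ?_
  simp [wt, entPairing, Finset.sum_filter]

/-- For `n ≥ 3`, the dual cone `Γ_n*` of valid quantum information inequalities
is not the (direct) sum of its balanced part and another cone whose span meets
the balanced subspace trivially. -/
theorem quantum_dual_cone_no_direct_sum (n : ℕ) (hn : 3 ≤ n) :
    ¬ ∃ C : Set (Finset (Fin n) → ℝ),
        Convex ℝ C ∧ (∀ v ∈ C, ∀ t : ℝ, 0 < t → t • v ∈ C) ∧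
        Submodule.span ℝ C ⊓ balancedSubspace n = ⊥ ∧
        dualCone (closure (quantumEntropyRegion n)) =
          (dualCone (closure (quantumEntropyRegion n)) ∩
            (balancedSubspace n : Set (Finset (Fin n) → ℝ))) + C := by
  rintro ⟨C, -, -, hspan, hsum⟩
  set D := dualCone (closure (quantumEntropyRegion n)) with hD
  have zeroD : (0 : Finset (Fin n) → ℝ) ∈ D := by
    intro v _; simp [entPairing]
  have CD : ∀ c ∈ C, c ∈ D := by
    intro c hc
    rw [hsum]
    exact ⟨0, ⟨zeroD, Submodule.zero_mem _⟩, c, hc, zero_add c⟩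
  have dec : ∀ f ∈ D, ∃ c ∈ C, f - c ∈ D ∧ f - c ∈ balancedSubspace n := by
    intro f hf
    rw [hsum] at hf
    obtain ⟨b, hb, c, hc, rfl⟩ := hf
    refine ⟨c, hc, ?_, ?_⟩
    · simpa using hb.1
    · simpa using hb.2
  have sD : ∀ I, (Pi.single I 1 : Finset (Fin n) → ℝ) ∈ D := fun I =>
    dual_of_region fun v hv => by rw [pairing_single]; exact region_nonneg hv I
  obtain ⟨i0, hi0⟩ : ∃ i : Fin n, i = ⟨0, by omega⟩ := ⟨_, rfl⟩
  obtain ⟨i1, hi1⟩ : ∃ i : Fin n, i = ⟨1, by omega⟩ := ⟨_, rfl⟩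
  obtain ⟨i2, hi2⟩ : ∃ i : Fin n, i = ⟨2, by omega⟩ := ⟨_, rfl⟩
  have n01 : i0 ≠ i1 := by simp [hi0, hi1]
  have n02 : i0 ≠ i2 := by simp [hi0, hi2]
  have n12 : i1 ≠ i2 := by simp [hi1, hi2]
  have wadd : ∀ i (f g : Finset (Fin n) → ℝ), wt i (f + g) = wt i f + wt i g :=
    fun i f g => pairing_add f g _
  have wsub : ∀ i (f g : Finset (Fin n) → ℝ), wt i (f - g) = wt i f - wt i g :=
    fun i f g => pairing_sub f g _
  have wsmul : ∀ i (t : ℝ) (f : Finset (Fin n) → ℝ), wt i (t • f) = t * wt i f :=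
    fun i t f => pairing_smul t f _
  have lift : ∀ j : Fin n, ∃ c ∈ C, ∀ i, wt i c = if i = j then 1 else 0 := by
    intro j
    obtain ⟨c, hc, -, hb⟩ := dec _ (sD {j})
    refine ⟨c, hc, fun i => ?_⟩
    have := (mem_balanced _).1 hb i
    rw [wsub, wt_single] at this
    simp only [Finset.mem_singleton] at this
    linarith
  obtain ⟨c0, hc0, w0⟩ := lift i0
  obtain ⟨c1, hc1, w1⟩ := lift i1
  obtain ⟨c2, hc2, w2⟩ := lift i2
  have main : ∀ f ∈ D, ∀ a0 a1 a2 : ℝ, (∀ i, wt i f = a0 * (if i = i0 then 1 else 0) +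
      a1 * (if i = i1 then 1 else 0) + a2 * (if i = i2 then 1 else 0)) →
      ∀ v ∈ quantumEntropyRegion n,
        a0 * entPairing c0 v + a1 * entPairing c1 v + a2 * entPairing c2 v ≤ entPairing f v := by
    intro f hf a0 a1 a2 hw v hv
    obtain ⟨c, hc, hd, hb⟩ := dec f hf
    have e : c - (a0 • c0 + a1 • c1 + a2 • c2) = 0 := by
      have hmem : c - (a0 • c0 + a1 • c1 + a2 • c2) ∈
          Submodule.span ℝ C ⊓ balancedSubspace n := by
        refine ⟨?_, ?_⟩
        · exact Submodule.sub_mem _ (Submodule.subset_span hc) (Submodule.add_mem _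
            (Submodule.add_mem _ (Submodule.smul_mem _ _ (Submodule.subset_span hc0))
              (Submodule.smul_mem _ _ (Submodule.subset_span hc1)))
            (Submodule.smul_mem _ _ (Submodule.subset_span hc2)))
        · refine (mem_balanced _).2 fun i => ?_
          have h1 := (mem_balanced _).1 hb i
          rw [wsub, hw] at h1
          rw [wsub, wadd, wadd, wsmul, wsmul, wsmul, w0, w1, w2]
          linarith
      rw [hspan] at hmem
      exact (Submodule.mem_bot ℝ).1 hmem
    have h1 := hd v (subset_closure hv)
    rw [sub_eq_zero.1 e, pairing_sub, pairing_add, pairing_add, pairing_smul, pairing_smul,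
      pairing_smul] at h1
    linarith
  -- Araki-Lieb functionals
  have al : ∀ J K : Finset (Fin n), Disjoint J K →
      (Pi.single (J ∪ K) 1 + Pi.single K 1 - Pi.single J 1 : Finset (Fin n) → ℝ) ∈ D := by
    intro J K h
    refine dual_of_region fun v hv => ?_
    rw [pairing_sub, pairing_add, pairing_single, pairing_single, pairing_single]
    linarith [region_araki_lieb hv J K h]
  have X1 := main _ (sD {i0, i1, i2}) 1 1 1 (by
    intro i
    rw [wt_single]
    by_cases h0 : i = i0
    · subst h0; simp [n01, n02]
    by_cases h1 : i = i1
    · subst h1; simp [n01.symm, n12]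
    by_cases h2 : i = i2
    · subst h2; simp [n02.symm, n12.symm]
    simp [h0, h1, h2]) _ (vecX_mem n)
  have G0 := main _ (al {i0} {i1, i2} (by simp [n01, n02])) 0 2 2 (by
    intro i
    rw [wsub, wadd, wt_single, wt_single, wt_single]
    by_cases h0 : i = i0
    · subst h0; simp [n01, n02]
    by_cases h1 : i = i1
    · subst h1; simp [n01.symm, n12]; norm_num
    by_cases h2 : i = i2
    · subst h2; simp [n02.symm, n12.symm]; norm_num
    simp [h0, h1, h2]) _ (vecG_mem n)
  have G1 := main _ (al {i1} {i0, i2} (by simp [n01.symm, n12])) 2 0 2 (by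
    intro i
    rw [wsub, wadd, wt_single, wt_single, wt_single]
    by_cases h0 : i = i0
    · subst h0; simp [n01, n02]; norm_num
    by_cases h1 : i = i1
    · subst h1; simp [n01.symm, n12]
    by_cases h2 : i = i2
    · subst h2; simp [n02.symm, n12.symm]; norm_num
    simp [h0, h1, h2]) _ (vecG_mem n)
  have G2 := main _ (al {i2} {i0, i1} (by simp [n02.symm, n12.symm])) 2 2 0 (by
    intro i
    rw [wsub, wadd, wt_single, wt_single, wt_single]
    by_cases h0 : i = i0
    · subst h0; simp [n01, n02]; norm_num
    by_cases h1 : i = i1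
    · subst h1; simp [n01.symm, n12]; norm_num
    by_cases h2 : i = i2
    · subst h2; simp [n02.symm, n12.symm]
    simp [h0, h1, h2]) _ (vecG_mem n)
  have iden : ∀ c : Finset (Fin n) → ℝ, entPairing c (vecX n) + entPairing c (vecG n)
      = entPairing c (vecT n) + wt i0 c + wt i1 c + wt i2 c := by
    intro c
    simp only [wt, entPairing, ← Finset.sum_add_distrib]
    refine Finset.sum_congr rfl fun I _ => ?_
    have := vec_identity hn I
    rw [← hi0, ← hi1, ← hi2] at this
    linear_combination c I * this
  have I0 := iden c0
  have I1 := iden c1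
  have I2 := iden c2
  rw [w0, w0, w0] at I0
  rw [w1, w1, w1] at I1
  rw [w2, w2, w2] at I2
  simp only [n01, n02, n12, n01.symm, n02.symm, n12.symm, if_true, if_false] at I0 I1 I2
  have T0 := CD c0 hc0 _ (subset_closure (vecT_mem n hn))
  have T1 := CD c1 hc1 _ (subset_closure (vecT_mem n hn))
  have T2 := CD c2 hc2 _ (subset_closure (vecT_mem n hn))
  rw [pairing_single, vecX_eq hn, ← hi0, ← hi1, ← hi2] at X1
  rw [pairing_sub, pairing_add, pairing_single, pairing_single, pairing_single, vecG_eq hn,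
    vecG_eq hn, vecG_eq hn, ← hi0, ← hi1, ← hi2] at G0 G1 G2
  simp at X1 G0 G1 G2
  linarith
end

section
/- Let p be a pmf on a finite product ∏ i : Fin n, 𝒳 i of nonempty finite types with entropy vector v = h(p), and suppose the ray {t • v : t ≥ 0} is an isolated extremal ray of closure(Σ_n). Then at least one of the following holds: (1) v_I = 0 for some Finset I with ∅ ≠ I ⊊ Fin n (so v arises from lower-dimensional extremal rays via the direct-sum injection); (2) there exists r ≥ 0 with v_I = r for every nonempty I ⊆ Fin n; or (3) p and all its marginals are flat: for every nonempty I ⊆ Fin n there exists c > 0 such that every value of the marginal p_I is either 0 or c. -/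
/-- A point `w` of a set `C` lies in a polyhedral region of `C` if, near `w`,
`C` is cut out by finitely many linear inequalities. -/
def LiesInPolyhedralRegion {V : Type*} [AddCommGroup V] [Module ℝ V]
    [TopologicalSpace V] (C : Set V) (w : V) : Prop :=
  ∃ U : Set V, IsOpen U ∧ w ∈ U ∧ ∃ (m : ℕ) (f : Fin m → (V →ₗ[ℝ] ℝ)),
    C ∩ U = U ∩ {x | ∀ j, 0 ≤ f j x}

/-- An extremal ray is isolated if each of its nonzero points lies in a
polyhedral region of the cone. -/
def IsIsolatedExtremalRay {V : Type*} [AddCommGroup V] [Module ℝ V]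
    [TopologicalSpace V] (C R : Set V) : Prop :=
  IsExtremalRay C R ∧ ∀ w ∈ R, w ≠ 0 → LiesInPolyhedralRegion C w

open Filter Topology

namespace IsoRay

open Classical in
/-- Fibre mass of `q` over the value `f x`. -/
noncomputable def fib {A B : Type} [Fintype A] (f : A → B) (q : A → ℝ) (x : A) : ℝ :=
  ∑ x', if f x' = f x then q x' else 0

/-- Coordinate restriction. -/
def res {n : ℕ} {𝒳 : Fin n → Type} (I : Finset (Fin n)) (x : ∀ i, 𝒳 i) : ∀ i : I, 𝒳 i.1 :=
  fun i => x i.1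

lemma map_fib {A B : Type} [Fintype A] (f : A → B) (p : PMF A) (x : A) :
    ((p.map f) (f x)).toReal = fib f (fun a => (p a).toReal) x := by
  classical
  rw [PMF.map_apply, tsum_fintype, ENNReal.toReal_sum]
  · unfold fib
    refine Finset.sum_congr rfl fun a _ => ?_
    by_cases h : f a = f x
    · simp [h]
    · simp [h, Ne.symm h]
  · intro a _
    split_ifs
    · exact p.apply_ne_top a
    · simp

lemma entropy_map {A B : Type} [Fintype A] [Finite B] (f : A → B) (p : PMF A) :
    shannonEntropy (p.map f) =
      -∑ x, (p x).toReal * Real.logb 2 (fib f (fun a => (p a).toReal) x) := by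
  classical
  have : Fintype B := Fintype.ofFinite B
  unfold shannonEntropy
  rw [tsum_fintype]
  congr 1
  have h1 : ∀ y, ((p.map f) y).toReal = ∑ a, if f a = y then (p a).toReal else 0 := by
    intro y
    rw [PMF.map_apply, tsum_fintype, ENNReal.toReal_sum]
    · refine Finset.sum_congr rfl fun a _ => ?_
      by_cases h : f a = y
      · simp [h]
      · simp [h, Ne.symm h]
    · intro a _
      split_ifs
      · exact p.apply_ne_top a
      · simp
  have h2 : ∀ y, ((p.map f) y).toReal * Real.logb 2 ((p.map f) y).toReal =
      ∑ a, if f a = y then (p a).toReal * Real.logb 2 ((p.map f) (f a)).toReal else 0 := by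
    intro y
    conv_lhs => rw [h1 y, Finset.sum_mul]
    refine Finset.sum_congr rfl fun a _ => ?_
    split_ifs with h
    · subst h; rw [← h1]
    · simp
  rw [Finset.sum_congr rfl fun y _ => h2 y, Finset.sum_comm]
  refine Finset.sum_congr rfl fun a _ => ?_
  rw [Finset.sum_ite_eq, if_pos (Finset.mem_univ _), map_fib]

section

variable {n : ℕ} {𝒳 : Fin n → Type} [∀ i, Fintype (𝒳 i)]

/-- Real-valued form of the entropy vector. -/
noncomputable def hvec (q : (∀ i, 𝒳 i) → ℝ) : Finset (Fin n) → ℝ :=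
  fun I => -∑ x, q x * Real.logb 2 (fib (res I) q x)

lemma entropyVector_eq (p : PMF (∀ i, 𝒳 i)) :
    entropyVector p = hvec (fun x => (p x).toReal) := by
  funext I
  exact entropy_map (res I) p

lemma hvec_mem [∀ i, Nonempty (𝒳 i)] (q : (∀ i, 𝒳 i) → ℝ) (h0 : ∀ x, 0 ≤ q x)
    (h1 : ∑ x, q x = 1) : hvec q ∈ classicalEntropyRegion n := by
  refine ⟨𝒳, fun i => inferInstance, fun i => inferInstance,
    PMF.ofFintype (fun x => ENNReal.ofReal (q x)) ?_, ?_⟩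
  · rw [← ENNReal.ofReal_sum_of_nonneg fun x _ => h0 x, h1, ENNReal.ofReal_one]
  · rw [entropyVector_eq]
    congr 1
    funext x
    simp [ENNReal.toReal_ofReal (h0 x)]

end

/-- Constant vectors on nonempty sets, with small value, are entropic. -/
lemma const_mem (n : ℕ) (a : ℝ) (ha : 0 ≤ a) (ha1 : a ≤ 1) :
    (fun I : Finset (Fin n) => if I = ∅ then 0 else a) ∈ classicalEntropyRegion n := by
  classical
  have hl : 0 < Real.log 2 := Real.log_pos (by norm_num)
  obtain ⟨b, hb, hba⟩ : ∃ b ∈ Set.Icc (0 : ℝ) 2⁻¹, Real.binEntropy b = a * Real.log 2 := by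
    have := intermediate_value_Icc (f := Real.binEntropy) (a := 0) (b := 2⁻¹) (by norm_num)
      Real.binEntropy_continuous.continuousOn
    apply this
    rw [Real.binEntropy_zero, Real.binEntropy_two_inv]
    exact ⟨by positivity, by nlinarith⟩
  have hb0 := hb.1
  have hb1 : b ≤ 1 := hb.2.trans (by norm_num)
  let q : Bool → ℝ := fun c => if c then b else 1 - b
  have hq0 : ∀ c, 0 ≤ q c := by intro c; cases c <;> simp [q, hb0, hb1]
  let P : PMF Bool := PMF.ofFintype (fun x => ENNReal.ofReal (q x)) (by
    rw [← ENNReal.ofReal_sum_of_nonneg fun x _ => hq0 x]; simp [q])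
  have hP : ∀ c, (P c).toReal = q c := by
    intro c; simp [P, ENNReal.toReal_ofReal (hq0 c)]
  refine ⟨fun _ => Bool, fun i => inferInstance, fun i => inferInstance,
    P.map (fun c _ => c), ?_⟩
  funext I
  unfold entropyVector
  rw [PMF.map_comp, entropy_map]
  simp only [hP, fib]
  by_cases hI : I = ∅
  · subst hI
    have : ∀ x x' : Bool, (((fun x (i : (∅ : Finset (Fin n))) => x i.1) ∘
      fun c (_ : Fin n) => c) x' : _ → Bool) = ((fun x (i : (∅ : Finset (Fin n))) => x i.1) ∘
      fun c (_ : Fin n) => c) x ↔ True := by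
      intro x x'; refine iff_true_intro ?_; funext i; exact absurd i.2 (Finset.notMem_empty _)
    simp only [this, if_true]
    simp [q]
  · obtain ⟨i, hi⟩ := Finset.nonempty_iff_ne_empty.mpr hI
    have : ∀ x x' : Bool, ((((fun x (i : I) => x i.1) ∘
      fun c (_ : Fin n) => c) x' : _ → Bool) = ((fun x (i : I) => x i.1) ∘
      fun c (_ : Fin n) => c) x) ↔ x' = x := by
      intro x x'
      constructor
      · intro h; exact congrFun h ⟨i, hi⟩
      · rintro rfl; rfl
    simp only [this, hI, if_false]
    simp [q]
    rw [Real.binEntropy_eq_negMulLog_add_negMulLog_one_sub] at hba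
    simp only [Real.negMulLog] at hba
    simp only [Real.logb]
    field_simp
    linarith

/-- First-order argument: the velocity of a curve in `C` through `v` is proportional to `v`. -/
lemma tangent {ι : Type} [Fintype ι] (C : Set (ι → ℝ)) (v w : ι → ℝ)
    (hray : IsIsolatedExtremalRay C (coneRay v)) (hv : v ≠ 0) (h : ℝ → ι → ℝ)
    (h0 : h 0 = v) (hd : HasDerivAt h w 0) (hC : ∀ᶠ t in 𝓝 (0 : ℝ), h t ∈ C) :
    ∃ l : ℝ, w = l • v := by
  obtain ⟨⟨hsub, -, hext⟩, hpoly⟩ := hray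
  have hvR : v ∈ coneRay v := ⟨1, by norm_num, by simp⟩
  obtain ⟨U, hU, hvU, m, f, hf⟩ := hpoly v hvR hv
  have hvf : ∀ j, 0 ≤ f j v := by
    have : v ∈ C ∩ U := ⟨hsub hvR, hvU⟩
    rw [hf] at this
    exact this.2
  have hcont : ∀ j, Continuous (f j) := fun j => LinearMap.continuous_of_finiteDimensional _
  have key : ∀ j, f j v = 0 → f j w = 0 := by
    intro j hj
    have hdj : HasDerivAt (fun t => f j (h t)) (f j w) 0 :=
      ((f j).toContinuousLinearMap.hasFDerivAt (x := h 0)).comp_hasDerivAt (0 : ℝ) hd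
    refine IsLocalMin.hasDerivAt_eq_zero ?_ hdj
    have hUe : ∀ᶠ t in 𝓝 (0 : ℝ), h t ∈ U :=
      hd.continuousAt (by rw [h0]; exact hU.mem_nhds hvU)
    filter_upwards [hC, hUe] with t ht1 ht2
    have : h t ∈ C ∩ U := ⟨ht1, ht2⟩
    rw [hf] at this
    rw [h0, hj]
    exact this.2 j
  have ev : ∀ᶠ d in 𝓝 (0 : ℝ), v + d • w ∈ C := by
    have hc : Continuous fun d : ℝ => v + d • w := by fun_prop
    have e1 : ∀ᶠ d in 𝓝 (0 : ℝ), v + d • w ∈ U :=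
      hc.continuousAt (by simpa using hU.mem_nhds hvU)
    have e2 : ∀ᶠ d in 𝓝 (0 : ℝ), ∀ j, 0 ≤ f j (v + d • w) := by
      rw [eventually_all]
      intro j
      rcases (hvf j).eq_or_lt with hj | hj
      · refine Eventually.of_forall fun d => ?_
        rw [map_add, map_smul, key j hj.symm, ← hj]; simp
      · have : ContinuousAt (fun d : ℝ => f j (v + d • w)) 0 := ((hcont j).comp hc).continuousAt
        have := this.eventually_mem (Ioi_mem_nhds (a := 0) (by simpa using hj))
        filter_upwards [this] with d hd
        exact le_of_lt hd
    filter_upwards [e1, e2] with d hd1 hd2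
    have : v + d • w ∈ C ∩ U := by rw [hf]; exact ⟨hd1, hd2⟩
    exact this.1
  have ev' : ∀ᶠ d in 𝓝 (0 : ℝ), v + (-d) • w ∈ C := by
    have : Tendsto (fun d : ℝ => -d) (𝓝 0) (𝓝 0) := by
      simpa using (continuous_neg (G := ℝ)).tendsto 0
    exact this.eventually ev
  obtain ⟨d, ⟨hd1, hd2⟩, hdpos⟩ :=
    (((ev.and ev').filter_mono nhdsWithin_le_nhds).and
      (self_mem_nhdsWithin : Set.Ioi (0 : ℝ) ∈ 𝓝[>] (0 : ℝ))).exists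
  have hdpos : 0 < d := hdpos
  obtain ⟨⟨s, -, hs⟩, -⟩ := hext ((2 : ℝ) • v) ⟨2, by norm_num, rfl⟩ _ hd1 _ hd2 (by
    rw [neg_smul, two_smul]; abel)
  refine ⟨d⁻¹ * (s - 1), ?_⟩
  funext i
  have := congrFun hs i
  simp only [Pi.add_apply, Pi.smul_apply, smul_eq_mul] at this ⊢
  field_simp
  linarith

section

variable {n : ℕ} {𝒳 : Fin n → Type} [∀ i, Fintype (𝒳 i)]

lemma le_fib {A B : Type} [Fintype A] (f : A → B) (q : A → ℝ) (h : ∀ x, 0 ≤ q x) (x : A) :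
    q x ≤ fib f q x := by
  classical
  unfold fib
  have := Finset.single_le_sum (f := fun x' => if f x' = f x then q x' else 0)
    (s := Finset.univ) (fun i _ => by split_ifs <;> simp [h]) (Finset.mem_univ x)
  simpa using this

lemma fib_congr {A B : Type} [Fintype A] (f : A → B) (q : A → ℝ) {x y : A} (h : f x = f y) :
    fib f q x = fib f q y := by
  unfold fib; rw [h]

open Classical in
lemma hvec_deriv (q : (∀ i, 𝒳 i) → ℝ) (hq : ∀ x, 0 ≤ q x) (hs : ∑ x, q x = 1)
    (x0 : ∀ i, 𝒳 i) (hx0 : 0 < q x0) :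
    HasDerivAt (fun t : ℝ => hvec fun x => (1 - t) * q x + t * (if x = x0 then 1 else 0))
      (fun I => -Real.logb 2 (fib (res I) q x0) - hvec q I) 0 := by
  rw [hasDerivAt_pi]
  intro I
  have hl : Real.log 2 ≠ 0 := (Real.log_pos (by norm_num)).ne'
  let e : (∀ i, 𝒳 i) → ℝ := fun x => if res I x = res I x0 then 1 else 0
  have hfib : ∀ (t : ℝ) x, fib (res I) (fun x => (1 - t) * q x + t * (if x = x0 then 1 else 0)) x
      = (1 - t) * fib (res I) q x + t * e x := by
    intro t x
    unfold fib
    have : e x = ∑ x', if res I x' = res I x then (if x' = x0 then (1 : ℝ) else 0) else 0 := by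
      rw [Finset.sum_eq_single x0]
      · simp [e, eq_comm]
      · intro b _ hb; simp [hb]
      · simp
    rw [this, Finset.mul_sum, Finset.mul_sum, ← Finset.sum_add_distrib]
    refine Finset.sum_congr rfl fun a _ => ?_
    by_cases h1 : res I a = res I x
    · simp only [if_pos h1]
    · simp only [if_neg h1]; simp
  have hterm : ∀ x, HasDerivAt (fun t : ℝ => ((1 - t) * q x + t * (if x = x0 then 1 else 0)) *
      Real.logb 2 ((1 - t) * fib (res I) q x + t * e x))
      (((if x = x0 then 1 else 0) - q x) * Real.logb 2 (fib (res I) q x) +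
        (q x * e x / fib (res I) q x0 - q x) / Real.log 2) 0 := by
    intro x
    have lin : ∀ a b : ℝ, HasDerivAt (fun t : ℝ => (1 - t) * a + t * b) (b - a) 0 := by
      intro a b
      have h := (((hasDerivAt_id (0 : ℝ)).const_sub 1).mul_const a).add
        ((hasDerivAt_id (0 : ℝ)).mul_const b)
      refine h.congr_deriv ?_
      ring
    rcases (hq x).eq_or_lt with h | h
    · have hx : x ≠ x0 := by rintro rfl; exact hx0.ne h
      simp only [← h, hx, if_false]
      simpa using hasDerivAt_const (0 : ℝ) (0 : ℝ)
    · have hm : 0 < fib (res I) q x := h.trans_le (le_fib _ _ hq x)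
      have h2 : HasDerivAt (fun t : ℝ => Real.logb 2 ((1 - t) * fib (res I) q x + t * e x))
          ((e x - fib (res I) q x) / fib (res I) q x / Real.log 2) 0 := by
        have := ((lin (fib (res I) q x) (e x)).log (by simpa using hm.ne')).div_const (Real.log 2)
        refine this.congr_deriv ?_
        simp
      have h3 := (lin (q x) (if x = x0 then 1 else 0)).mul h2
      refine h3.congr_deriv ?_
      have he : e x / fib (res I) q x0 = e x / fib (res I) q x := by
        simp only [e]
        split_ifs with hh
        · rw [fib_congr _ _ hh]
        · simp
      rw [mul_div_assoc, he]
      simp only [sub_zero, one_mul, zero_mul, add_zero]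
      field_simp
  have hsum := (HasDerivAt.fun_sum (u := Finset.univ) fun x _ => hterm x).neg
  have hfun : (fun t : ℝ => hvec (fun x => (1 - t) * q x + t * (if x = x0 then 1 else 0)) I) =
      fun t => -∑ x, ((1 - t) * q x + t * (if x = x0 then 1 else 0)) *
      Real.logb 2 ((1 - t) * fib (res I) q x + t * e x) := by
    funext t
    unfold hvec
    simp only [hfib]
  rw [hfun]
  refine hsum.congr_deriv ?_
  have hm0 : 0 < fib (res I) q x0 := hx0.trans_le (le_fib _ _ hq x0)
  have hone : ∑ x, q x * e x / fib (res I) q x0 = 1 := by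
    rw [← Finset.sum_div, div_eq_one_iff_eq hm0.ne']
    unfold fib
    refine Finset.sum_congr rfl fun a _ => ?_
    simp [e]
  rw [Finset.sum_add_distrib, ← Finset.sum_div, Finset.sum_sub_distrib, hone, hs]
  simp only [sub_mul, Finset.sum_sub_distrib, ite_mul, one_mul, zero_mul, Finset.sum_ite_eq',
    Finset.mem_univ, if_true, hvec]
  ring

open Classical in
lemma curve_mem [∀ i, Nonempty (𝒳 i)] (q : (∀ i, 𝒳 i) → ℝ) (hq : ∀ x, 0 ≤ q x)
    (hs : ∑ x, q x = 1) (x0 : ∀ i, 𝒳 i) (hx0 : 0 < q x0) :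
    ∀ᶠ t in 𝓝 (0 : ℝ), hvec (fun x => (1 - t) * q x + t * (if x = x0 then 1 else 0)) ∈
      closure (classicalEntropyRegion n) := by
  have e1 : ∀ᶠ t in 𝓝 (0 : ℝ), t < 1 := Iio_mem_nhds (by norm_num)
  have e2 : ∀ᶠ t in 𝓝 (0 : ℝ), 0 < (1 - t) * q x0 + t := by
    have : ContinuousAt (fun t : ℝ => (1 - t) * q x0 + t) 0 := by fun_prop
    exact this.eventually_mem (Ioi_mem_nhds (a := 0) (by simpa using hx0))
  filter_upwards [e1, e2] with t h1 h2
  refine subset_closure (hvec_mem _ ?_ ?_)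
  · intro x
    by_cases h : x = x0
    · subst h; simpa using h2.le
    · simpa [h] using mul_nonneg (sub_nonneg.2 h1.le) (hq x)
  · rw [Finset.sum_add_distrib, ← Finset.mul_sum, ← Finset.mul_sum, hs]
    simp

/-- Entropy of a tilted distribution. -/
lemma hvec_tilt (q m u : (∀ i, 𝒳 i) → ℝ) (hq : ∀ x, 0 ≤ q x) (v : Finset (Fin n) → ℝ)
    (hm : ∀ x, 0 < q x → ∀ I, -Real.logb 2 (fib (res I) q x) = m x * v I)
    (hu : ∀ x, 0 < u x) (hum : ∀ x y, m x = m y → u x = u y)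
    (I : Finset (Fin n)) (hvI : v I ≠ 0) :
    hvec (fun x => q x * u x) I =
      (∑ x, q x * u x * m x) * v I - ∑ x, q x * (u x * Real.logb 2 (u x)) := by
  unfold hvec
  rw [Finset.sum_mul, ← Finset.sum_sub_distrib, ← Finset.sum_neg_distrib]
  refine Finset.sum_congr rfl fun x _ => ?_
  rcases (hq x).eq_or_lt with h | h
  · simp [← h]
  have hf : fib (res I) (fun x => q x * u x) x = fib (res I) q x * u x := by
    unfold fib
    rw [Finset.sum_mul]
    refine Finset.sum_congr rfl fun y _ => ?_
    split_ifs with hy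
    · rcases (hq y).eq_or_lt with h' | h'
      · simp [← h']
      · have : m y = m x := by
          have h1 := hm y h' I
          rw [fib_congr _ _ hy, hm x h I] at h1
          exact (mul_right_cancel₀ hvI h1).symm
        simp only [hum y x this]
    · simp
  have hm0 : 0 < fib (res I) q x := h.trans_le (le_fib _ _ hq x)
  rw [hf, Real.logb_mul hm0.ne' (hu x).ne']
  have := hm x h I
  linear_combination q x * u x * this

end

end IsoRay

/-- Distributions whose entropy vector generates an isolated extremal ray of the
closed classical entropy cone: either the vector comes from a lower-dimensional
direct sum (some nontrivial proper entropy vanishes), or it is constant on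
nonempty subsets, or the distribution and all its marginals are flat. -/
theorem structure_of_distributions_on_isolated_extremal_rays
    (n : ℕ) (𝒳 : Fin n → Type) [∀ i, Fintype (𝒳 i)] [∀ i, Nonempty (𝒳 i)]
    (p : PMF (∀ i, 𝒳 i))
    (v : Finset (Fin n) → ℝ) (hv : v = entropyVector p)
    (hray : IsIsolatedExtremalRay (closure (classicalEntropyRegion n)) (coneRay v)) :
    (∃ I : Finset (Fin n), I ≠ ∅ ∧ I ≠ Finset.univ ∧ v I = 0) ∨
    (∃ r : ℝ, 0 ≤ r ∧ ∀ I : Finset (Fin n), I ≠ ∅ → v I = r) ∨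
    (∀ I : Finset (Fin n), I ≠ ∅ → ∃ c : ℝ, 0 < c ∧
        ∀ y : (∀ i : I, 𝒳 i.1),
          (p.map fun x => fun i : I => x i.1) y = 0 ∨
          (p.map fun x => fun i : I => x i.1) y = ENNReal.ofReal c) := by
  classical
  have hl : 0 < Real.log 2 := Real.log_pos (by norm_num)
  let q : (∀ i, 𝒳 i) → ℝ := fun x => (p x).toReal
  have hq : ∀ x, 0 ≤ q x := fun x => ENNReal.toReal_nonneg
  have hs : ∑ x, q x = 1 := by
    have h := p.tsum_coe
    rw [tsum_fintype] at h
    have h2 := congrArg ENNReal.toReal h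
    rwa [ENNReal.toReal_sum fun a _ => p.apply_ne_top a, ENNReal.toReal_one] at h2
  have hvq : v = IsoRay.hvec q := by rw [hv, IsoRay.entropyVector_eq]
  by_cases hv0 : v = 0
  · exact Or.inr (Or.inl ⟨0, le_rfl, fun I _ => by simp [hv0]⟩)
  have hstep : ∀ x, 0 < q x → ∃ m : ℝ, ∀ I,
      -Real.logb 2 (IsoRay.fib (IsoRay.res I) q x) = m * v I := by
    intro x0 hx0
    obtain ⟨l, hl⟩ := IsoRay.tangent _ v _ hray hv0 _ (by rw [hvq]; simp)
      (IsoRay.hvec_deriv q hq hs x0 hx0) (IsoRay.curve_mem q hq hs x0 hx0)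
    refine ⟨1 + l, fun I => ?_⟩
    have := congrFun hl I
    rw [← hvq] at this
    simp only [Pi.smul_apply, smul_eq_mul] at this
    linarith
  choose! m hm using hstep
  by_cases hc : ∀ x y, 0 < q x → 0 < q y → m x = m y
  · right; right
    intro I _
    obtain ⟨x0, hx0⟩ : ∃ x, 0 < q x := by
      by_contra! h
      have : ∑ x, q x ≤ 0 := Finset.sum_nonpos fun x _ => h x
      linarith
    refine ⟨IsoRay.fib (IsoRay.res I) q x0, hx0.trans_le (IsoRay.le_fib _ _ hq x0), fun y => ?_⟩
    by_cases hy : (p.map fun x => fun i : I => x i.1) y = 0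
    · exact Or.inl hy
    right
    have hy' : y ∈ (p.map fun x => fun i : I => x i.1).support := hy
    rw [PMF.mem_support_map_iff] at hy'
    obtain ⟨x, hx, rfl⟩ := hy'
    have hxq : 0 < q x := ENNReal.toReal_pos hx (p.apply_ne_top x)
    have h1 := IsoRay.map_fib (IsoRay.res I) p x
    have h2 := hm x hxq I
    rw [hc x x0 hxq hx0, ← hm x0 hx0 I, neg_inj] at h2
    have h3 := Real.logb_injOn_pos (b := 2) (by norm_num)
      (Set.mem_Ioi.2 (hxq.trans_le (IsoRay.le_fib (IsoRay.res I) _ hq x)))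
      (Set.mem_Ioi.2 (hx0.trans_le (IsoRay.le_fib (IsoRay.res I) _ hq x0))) h2
    rw [← h3]
    change _ = ENNReal.ofReal (IsoRay.fib (IsoRay.res I) (fun a => (p a).toReal) x)
    rw [← h1, ENNReal.ofReal_toReal (PMF.apply_ne_top _ _)]
    rfl
  by_cases hcase : ∃ I : Finset (Fin n), I ≠ ∅ ∧ I ≠ Finset.univ ∧ v I = 0
  · exact Or.inl hcase
  right; left
  push Not at hc hcase
  obtain ⟨x1, x2, hx1, hx2, hne⟩ := hc
  have hinj : ∀ x, IsoRay.fib (IsoRay.res Finset.univ) q x = q x := by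
    intro x
    unfold IsoRay.fib
    rw [Finset.sum_eq_single x]
    · simp
    · intro b _ hb
      rw [if_neg]
      intro h
      apply hb
      funext i
      exact congrFun h ⟨i, Finset.mem_univ i⟩
    · simp
  have hvu : v Finset.univ ≠ 0 := by
    intro h
    have hone : ∀ x, 0 < q x → q x = 1 := by
      intro x hx
      have h1 := hm x hx Finset.univ
      rw [h, mul_zero, neg_eq_zero, hinj] at h1
      refine Real.logb_injOn_pos (b := 2) (by norm_num) (Set.mem_Ioi.2 hx)
        (Set.mem_Ioi.2 one_pos) ?_
      rw [h1, Real.logb_one]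
    have hne' : x1 ≠ x2 := by rintro rfl; exact hne rfl
    have h2 : ∑ x ∈ {x1, x2}, q x ≤ ∑ x, q x :=
      Finset.sum_le_sum_of_subset_of_nonneg (Finset.subset_univ _) fun x _ _ => hq x
    rw [Finset.sum_pair hne', hone x1 hx1, hone x2 hx2, hs] at h2
    norm_num at h2
  have hvI : ∀ I : Finset (Fin n), I ≠ ∅ → v I ≠ 0 := by
    intro I hI
    by_cases h : I = Finset.univ
    · rw [h]; exact hvu
    · exact hcase I (Finset.nonempty_iff_ne_empty.2 hI) h
  have hmean : ∑ x, q x * m x = 1 := by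
    have h1 : v Finset.univ = (∑ x, q x * m x) * v Finset.univ := by
      conv_lhs => rw [hvq]
      unfold IsoRay.hvec
      rw [Finset.sum_mul, ← Finset.sum_neg_distrib]
      refine Finset.sum_congr rfl fun x _ => ?_
      rcases (hq x).eq_or_lt with h | h
      · simp [← h]
      · rw [mul_assoc, ← hm x h]; ring
    exact mul_right_cancel₀ hvu (by rw [← h1, one_mul])
  obtain ⟨x3, hx3, hx3m⟩ : ∃ x, 0 < q x ∧ m x ≠ 1 := by
    by_cases h : m x1 = 1
    · exact ⟨x2, hx2, fun h' => hne (h.trans h'.symm)⟩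
    · exact ⟨x1, hx1, h⟩
  obtain ⟨t, ⟨hupos, hsmall⟩, ht⟩ : ∃ t : ℝ, ((∀ x, 0 < 1 + t * (m x - 1)) ∧
      ∑ x, q x * ((1 + t * (m x - 1)) * Real.logb 2 (1 + t * (m x - 1))) < 1) ∧ 0 < t := by
    have e1 : ∀ᶠ t in 𝓝 (0 : ℝ), ∀ x, 0 < 1 + t * (m x - 1) := by
      rw [eventually_all]
      intro x
      have : ContinuousAt (fun t : ℝ => 1 + t * (m x - 1)) 0 := by fun_prop
      exact this.eventually_mem (Ioi_mem_nhds (a := 0) (by simp))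
    have e2 : ∀ᶠ t in 𝓝 (0 : ℝ),
        ∑ x, q x * ((1 + t * (m x - 1)) * Real.logb 2 (1 + t * (m x - 1))) < 1 := by
      have : ContinuousAt (fun t : ℝ =>
          ∑ x, q x * ((1 + t * (m x - 1)) * Real.logb 2 (1 + t * (m x - 1)))) 0 := by
        refine tendsto_finsetSum _ fun x _ => ?_
        have h1 : ContinuousAt (fun t : ℝ => 1 + t * (m x - 1)) 0 := by fun_prop
        have h2 : ContinuousAt (fun t : ℝ => Real.logb 2 (1 + t * (m x - 1))) 0 :=
          (h1.log (by simp)).div_const _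
        exact (h1.mul h2).const_mul _
      exact this.eventually_mem (isOpen_Iio.mem_nhds (Set.mem_Iio.2 (by simp)))
    exact (((e1.and e2).filter_mono nhdsWithin_le_nhds).and
      (self_mem_nhdsWithin : Set.Ioi (0 : ℝ) ∈ 𝓝[>] (0 : ℝ))).exists
  let u : (∀ i, 𝒳 i) → ℝ := fun x => 1 + t * (m x - 1)
  have hqu : ∑ x, q x * u x = 1 := by
    have : ∀ x, q x * u x = q x + t * (q x * m x) - t * q x := fun x => by simp only [u]; ring
    simp only [this, Finset.sum_sub_distrib, Finset.sum_add_distrib, ← Finset.mul_sum, hs, hmean]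
    ring
  have hqum : 0 ≤ ∑ x, q x * u x * m x := by
    have h1 : ∀ x, q x * u x * m x = q x * u x + (q x * m x - q x) + t * (q x * (m x - 1) ^ 2) :=
      fun x => by simp only [u]; ring
    simp only [h1, Finset.sum_sub_distrib, Finset.sum_add_distrib, ← Finset.mul_sum, hs, hmean, hqu]
    have : 0 ≤ ∑ x, q x * (m x - 1) ^ 2 :=
      Finset.sum_nonneg fun x _ => mul_nonneg (hq x) (sq_nonneg _)
    have := mul_nonneg ht.le this
    linarith
  obtain ⟨a, ha⟩ : ∃ a, a = ∑ x, q x * (u x * Real.logb 2 (u x)) := ⟨_, rfl⟩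
  have ha1 : a ≤ 1 := by rw [ha]; exact hsmall.le
  have hlog : ∀ y : ℝ, 0 < y → y ≠ 1 → y - 1 < y * Real.log y := by
    intro y hy hy1
    have := Real.log_lt_sub_one_of_pos (inv_pos.2 hy) (by simpa using hy1)
    rw [Real.log_inv] at this
    have h2 := mul_lt_mul_of_pos_left this hy
    rw [mul_sub, mul_inv_cancel₀ hy.ne'] at h2
    linarith
  have hlog' : ∀ y : ℝ, 0 < y → y - 1 ≤ y * Real.log y := by
    intro y hy
    by_cases h : y = 1
    · simp [h]
    · exact (hlog y hy h).le
  have hapos : 0 < a := by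
    have h1 : ∑ x, q x * (u x - 1) < ∑ x, q x * (u x * Real.log (u x)) := by
      refine Finset.sum_lt_sum (fun x _ => mul_le_mul_of_nonneg_left (hlog' _ (hupos x)) (hq x))
        ⟨x3, Finset.mem_univ _, mul_lt_mul_of_pos_left (hlog _ (hupos x3) ?_) hx3⟩
      intro h
      have h' : t * (m x3 - 1) = 0 := by linarith
      rcases mul_eq_zero.1 h' with h' | h'
      · exact ht.ne' h'
      · exact hx3m (by linarith)
    have h2 : ∑ x, q x * (u x - 1) = 0 := by
      simp only [mul_sub, mul_one, Finset.sum_sub_distrib, hqu, hs, sub_self]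
    have h3 : a = (∑ x, q x * (u x * Real.log (u x))) / Real.log 2 := by
      rw [ha, Finset.sum_div]
      refine Finset.sum_congr rfl fun x _ => ?_
      simp only [Real.logb]; ring
    rw [h3]
    rw [h2] at h1
    exact div_pos h1 hl
  have hempty : ∀ q' : (∀ i, 𝒳 i) → ℝ, ∑ x, q' x = 1 → IsoRay.hvec q' ∅ = 0 := by
    intro q' hq'
    have : ∀ x, IsoRay.fib (IsoRay.res ∅) q' x = 1 := by
      intro x
      unfold IsoRay.fib
      rw [← hq']
      refine Finset.sum_congr rfl fun y _ => if_pos ?_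
      funext i
      exact absurd i.2 (Finset.notMem_empty _)
    simp [IsoRay.hvec, this]
  obtain ⟨⟨-, -, hext⟩, -⟩ := hray
  obtain ⟨-, s, hs0, hsv⟩ := hext ((∑ x, q x * u x * m x) • v) ⟨_, hqum, rfl⟩
    (IsoRay.hvec fun x => q x * u x)
    (subset_closure (IsoRay.hvec_mem _ (fun x => mul_nonneg (hq x) (hupos x).le) hqu))
    _ (subset_closure (IsoRay.const_mem n a hapos.le ha1)) (by
      funext I
      simp only [Pi.add_apply, Pi.smul_apply, smul_eq_mul]
      by_cases hI : I = ∅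
      · subst hI
        rw [hempty _ hqu, hvq, hempty _ hs]
        simp
      · rw [IsoRay.hvec_tilt q m u hq v hm hupos (fun x y h => by simp only [u, h]) I (hvI I hI),
          if_neg hI, ha]
        ring)
  have hsI : ∀ I : Finset (Fin n), I ≠ ∅ → a = s * v I := by
    intro I hI
    have := congrFun hsv I
    simpa [hI] using this
  refine ⟨a / s, div_nonneg hapos.le hs0, fun I hI => ?_⟩
  have h := hsI I hI
  have hsne : s ≠ 0 := by rintro rfl; simp at h; exact hapos.ne' h
  rw [h]; field_simp
end

section
/- Fix integers d ≥ 1 and n ≥ 0 and let V = Fin n → (ZMod d × ZMod d) with standard symplectic form ω. For every ZMod d-submodule M ⊆ V, the symplectic complement M^ω = {v ∈ V : ω(v,m) = 0 for all m ∈ M} is a submodule and satisfies Nat.card M · Nat.card M^ω = Nat.card V = d^(2n); in particular (M^ω)^ω = M. -/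
/-- The standard symplectic form on the finite phase space
`V = Fin n → ZMod d × ZMod d`. -/
def symplForm (d n : ℕ) (v w : Fin n → ZMod d × ZMod d) : ZMod d :=
  ∑ i, ((v i).1 * (w i).2 - (v i).2 * (w i).1)

lemma symplForm_zero_left (d n : ℕ) (m : Fin n → ZMod d × ZMod d) :
    symplForm d n 0 m = 0 := by
  simp [symplForm]

lemma symplForm_add_left (d n : ℕ) (a b m : Fin n → ZMod d × ZMod d) :
    symplForm d n (a + b) m = symplForm d n a m + symplForm d n b m := by
  simp only [symplForm, ← Finset.sum_add_distrib]
  refine Finset.sum_congr rfl fun i _ => ?_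
  simp only [Pi.add_apply, Prod.fst_add, Prod.snd_add]
  ring

lemma symplForm_smul_left (d n : ℕ) (c : ZMod d) (a m : Fin n → ZMod d × ZMod d) :
    symplForm d n (c • a) m = c * symplForm d n a m := by
  simp only [symplForm, Finset.mul_sum]
  refine Finset.sum_congr rfl fun i _ => ?_
  simp only [Pi.smul_apply, Prod.smul_fst, Prod.smul_snd, smul_eq_mul]
  ring

/-- The symplectic complement `M^ω = {v : ω(v,m) = 0 for all m ∈ M}` of a
submodule of the finite phase space; it is again a submodule. -/
def symplComplement {d n : ℕ} (M : Submodule (ZMod d) (Fin n → ZMod d × ZMod d)) :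
    Submodule (ZMod d) (Fin n → ZMod d × ZMod d) where
  carrier := {v | ∀ m ∈ M, symplForm d n v m = 0}
  zero_mem' := fun m _ => symplForm_zero_left d n m
  add_mem' := by
    intro a b ha hb m hm
    rw [symplForm_add_left, ha m hm, hb m hm, add_zero]
  smul_mem' := by
    intro c a ha m hm
    rw [symplForm_smul_left, ha m hm, mul_zero]

lemma symplForm_antisymm (d n : ℕ) (v w : Fin n → ZMod d × ZMod d) :
    symplForm d n v w = - symplForm d n w v := by
  simp only [symplForm, ← Finset.sum_neg_distrib]
  refine Finset.sum_congr rfl fun i _ => ?_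
  ring

/-- `v ↦ ω(v, m)` as an additive homomorphism. -/
def symplHomLeft (d n : ℕ) (m : Fin n → ZMod d × ZMod d) :
    (Fin n → ZMod d × ZMod d) →+ ZMod d where
  toFun v := symplForm d n v m
  map_zero' := symplForm_zero_left d n m
  map_add' a b := symplForm_add_left d n a b m

lemma symplForm_nondeg (d n : ℕ) (m : Fin n → ZMod d × ZMod d)
    (h : ∀ v, symplForm d n v m = 0) : m = 0 := by
  funext i
  have h1 := h (Pi.single i (1, 0))
  have h2 := h (Pi.single i (0, 1))
  unfold symplForm at h1 h2
  rw [Finset.sum_eq_single i (by intro b _ hb; simp [hb]) (by simp)] at h1 h2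
  simp at h1 h2
  exact Prod.ext h2 h1

lemma mem_symplComplement {d n : ℕ} (M : Submodule (ZMod d) (Fin n → ZMod d × ZMod d))
    (v : Fin n → ZMod d × ZMod d) :
    v ∈ symplComplement M ↔ ∀ m ∈ M, symplForm d n v m = 0 := Iff.rfl

lemma stdAddChar_eq_one_iff (d : ℕ) [NeZero d] (x : ZMod d) :
    ZMod.stdAddChar x = 1 ↔ x = 0 := by
  rw [← ZMod.injective_stdAddChar.eq_iff (a := x) (b := 0), AddChar.map_zero_eq_one]

lemma card_mul_aux (d n : ℕ) [NeZero d]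
    (M : Submodule (ZMod d) (Fin n → ZMod d × ZMod d)) :
    Nat.card M * Nat.card (symplComplement M) = Nat.card (Fin n → ZMod d × ZMod d) := by
  classical
  have hA : ∀ m : M, ∑ v : Fin n → ZMod d × ZMod d, ZMod.stdAddChar (symplForm d n v m)
      = if m = 0 then (Fintype.card (Fin n → ZMod d × ZMod d) : ℂ) else 0 := by
    intro m
    have := AddChar.sum_eq_ite
      ((ZMod.stdAddChar (N := d)).compAddMonoidHom (symplHomLeft d n m))
    refine this.trans (if_congr ?_ rfl rfl)
    rw [AddChar.eq_zero_iff]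
    constructor
    · intro h
      apply Subtype.ext
      apply symplForm_nondeg
      intro v
      exact (stdAddChar_eq_one_iff d _).1 (h v)
    · rintro rfl v
      refine (stdAddChar_eq_one_iff d _).2 ?_
      change symplForm d n v 0 = 0
      rw [symplForm_antisymm, symplForm_zero_left, neg_zero]
  have hB : ∀ v : Fin n → ZMod d × ZMod d, ∑ m : M, ZMod.stdAddChar (symplForm d n v m)
      = if v ∈ symplComplement M then (Fintype.card M : ℂ) else 0 := by
    intro v
    have := AddChar.sum_eq_ite
      ((ZMod.stdAddChar (N := d)).compAddMonoidHom
        ((-(symplHomLeft d n v)).comp M.subtype.toAddMonoidHom))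
    have e : ∀ m : M, ((ZMod.stdAddChar (N := d)).compAddMonoidHom
        ((-(symplHomLeft d n v)).comp M.subtype.toAddMonoidHom)) m
        = ZMod.stdAddChar (symplForm d n v m) := by
      intro m
      rw [symplForm_antisymm]
      rfl
    simp only [e] at this
    refine this.trans (if_congr ?_ rfl rfl)
    rw [AddChar.eq_zero_iff]
    simp only [e, stdAddChar_eq_one_iff, mem_symplComplement, Subtype.forall]
  have key := Finset.sum_comm (s := (Finset.univ : Finset M))
    (t := (Finset.univ : Finset (Fin n → ZMod d × ZMod d)))
    (f := fun m v => ZMod.stdAddChar (symplForm d n v m))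
  simp only [hA, hB] at key
  rw [Finset.sum_ite_eq' , ← Finset.sum_filter, Finset.sum_const, ← Fintype.card_subtype] at key
  simp only [Finset.mem_univ, if_true, nsmul_eq_mul] at key
  simp only [Nat.card_eq_fintype_card]
  rw [mul_comm]
  exact_mod_cast key.symm

/-- `|M| · |M^ω| = |V| = d^(2n)`; in particular `(M^ω)^ω = M`. -/
theorem card_mul_card_symplComplement (d n : ℕ) (hd : 1 ≤ d)
    (M : Submodule (ZMod d) (Fin n → ZMod d × ZMod d)) :
    Nat.card M * Nat.card (symplComplement M) =
        Nat.card (Fin n → ZMod d × ZMod d) ∧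
    Nat.card (Fin n → ZMod d × ZMod d) = d ^ (2 * n) ∧
    symplComplement (symplComplement M) = M := by
  haveI : NeZero d := ⟨by omega⟩
  refine ⟨card_mul_aux d n M, ?_, ?_⟩
  · simp [Nat.card_eq_fintype_card, ZMod.card, pow_mul, sq]
  · symm
    have hle : M ≤ symplComplement (symplComplement M) := by
      intro m hm v hv
      rw [symplForm_antisymm, hv m hm, neg_zero]
    have h1 := card_mul_aux d n M
    have h2 := card_mul_aux d n (symplComplement M)
    have hpos : 0 < Nat.card (symplComplement M) := Nat.card_pos
    have hc : Nat.card M = Nat.card (symplComplement (symplComplement M)) := by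
      rw [← h1, mul_comm] at h2
      exact (Nat.eq_of_mul_eq_mul_right hpos h2).symm
    apply SetLike.coe_injective
    exact Set.eq_of_subset_of_ncard_le hle hc.ge (Set.toFinite _)
end

section
/- Let A be a nonempty finite type, n, m ∈ ℕ, and let x : Fin m → (Fin n → A) be a word of length m over the product alphabet A^n. For I : Finset (Fin n), let x_I : Fin m → (↥I → A) denote the marginal word, (x_I)(α)(i) = x(α)(i), and let T(x) be the type class of x, namely the finite set {x ∘ σ : σ a permutation of Fin m}. Then for every I : Finset (Fin n), the pushforward of the uniform probability distribution on T(x) under the marginalization map y ↦ y_I equals the uniform probability distribution on T(x_I). (In particular, for a composite random variable with rational distribution of denominator q, taking x of length qk realizes, for every k, a random variable all of whose marginals are uniformly distributed on the corresponding marginal type classes.) -/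
/-- The type class of a word `x` of length `m`: its orbit under the symmetric
group permuting the positions. -/
noncomputable def typeClass {B : Type*} {m : ℕ} (x : Fin m → B) : Finset (Fin m → B) :=
  letI := Classical.decEq B
  Finset.image (fun σ : Equiv.Perm (Fin m) => x ∘ σ) Finset.univ

lemma self_mem_typeClass {B : Type*} {m : ℕ} (x : Fin m → B) : x ∈ typeClass x := by
  classical
  refine Finset.mem_image.mpr ⟨1, Finset.mem_univ _, ?_⟩
  ext α
  simp

lemma mem_typeClass_iff {B : Type*} {m : ℕ} (x y : Fin m → B) :
    y ∈ typeClass x ↔ ∃ σ : Equiv.Perm (Fin m), x ∘ σ = y := by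
  classical
  simp [typeClass]

lemma comp_mem_typeClass_iff {B : Type*} {m : ℕ} (x y : Fin m → B) (σ : Equiv.Perm (Fin m)) :
    y ∘ σ ∈ typeClass x ↔ y ∈ typeClass x := by
  rw [mem_typeClass_iff, mem_typeClass_iff]
  constructor
  · rintro ⟨τ, h⟩
    refine ⟨σ.symm.trans τ, ?_⟩
    funext a
    have := congrFun h (σ.symm a)
    simpa using this
  · rintro ⟨τ, rfl⟩
    exact ⟨σ.trans τ, rfl⟩

/-- A permutation-invariant pmf supported on a type class is uniform on it. -/
lemma eq_uniform_of_invariant {B : Type*} {m : ℕ} (z : Fin m → B) (p : PMF (Fin m → B))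
    (hs : (typeClass z).Nonempty)
    (hinv : ∀ (σ : Equiv.Perm (Fin m)) y, p (y ∘ σ) = p y)
    (hsupp : ∀ y, y ∉ typeClass z → p y = 0) :
    p = PMF.uniformOfFinset (typeClass z) hs := by
  have hc : ∀ y ∈ typeClass z, p y = p z := by
    intro y hy
    obtain ⟨σ, rfl⟩ := (mem_typeClass_iff z y).1 hy
    exact hinv σ z
  have hsum : ((typeClass z).card : ENNReal) * p z = 1 := by
    have h1 := p.tsum_coe
    rw [tsum_eq_sum (s := typeClass z) (fun y hy => hsupp y hy), Finset.sum_congr rfl hc] at h1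
    simpa using h1
  ext y
  by_cases hy : y ∈ typeClass z
  · rw [PMF.uniformOfFinset_apply_of_mem _ hy, hc y hy]
    exact ENNReal.eq_inv_of_mul_eq_one_left (by rw [mul_comm]; exact hsum)
  · rw [PMF.uniformOfFinset_apply_of_notMem _ hy, hsupp y hy]

lemma map_uniform_aux
    (A : Type) (n m : ℕ)
    (x : Fin m → (Fin n → A)) (I : Finset (Fin n)) (hx : (typeClass x).Nonempty)
    (hz : (typeClass (fun α => fun i : I => x α i.1)).Nonempty) :
    PMF.map (fun y : Fin m → (Fin n → A) => fun α => fun i : I => y α i.1)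
        (PMF.uniformOfFinset (typeClass x) hx) =
      PMF.uniformOfFinset (typeClass (fun α => fun i : I => x α i.1)) hz := by
  classical
  apply eq_uniform_of_invariant
  · intro σ w
    rw [PMF.map_apply, PMF.map_apply]
    rw [← (Equiv.arrowCongr σ.symm (Equiv.refl (Fin n → A))).tsum_eq]
    refine tsum_congr fun y => ?_
    have he : (Equiv.arrowCongr σ.symm (Equiv.refl (Fin n → A))) y = y ∘ σ := rfl
    rw [he]
    have hp : PMF.uniformOfFinset (typeClass x) hx (y ∘ σ) =
        PMF.uniformOfFinset (typeClass x) hx y := by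
      simp only [PMF.uniformOfFinset_apply, comp_mem_typeClass_iff]
      congr
    rw [hp]
    have hiff : (w ∘ σ = fun α => fun i : I => (y ∘ σ) α i.1) ↔
        (w = fun α => fun i : I => y α i.1) :=
      ⟨fun h => σ.surjective.injective_comp_right h, fun h => by rw [h]; rfl⟩
    simp only [hiff]
    congr
  · intro w hw
    rw [PMF.apply_eq_zero_iff, PMF.mem_support_map_iff]
    rintro ⟨y, hy, rfl⟩
    rw [PMF.mem_support_uniformOfFinset_iff, mem_typeClass_iff] at hy
    obtain ⟨σ, rfl⟩ := hy
    exact hw ((mem_typeClass_iff _ _).2 ⟨σ, rfl⟩)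

/-- Marginalizing a uniformly distributed type class yields the uniform
distribution on the marginal type class. -/
theorem map_uniform_typeClass_eq_uniform_marginal_typeClass
    (A : Type) [Fintype A] [Nonempty A] (n m : ℕ)
    (x : Fin m → (Fin n → A)) (I : Finset (Fin n)) :
    PMF.map (fun y : Fin m → (Fin n → A) => fun α => fun i : I => y α i.1)
        (PMF.uniformOfFinset (typeClass x) ⟨x, self_mem_typeClass x⟩) =
      PMF.uniformOfFinset (typeClass (fun α => fun i : I => x α i.1))
        ⟨_, self_mem_typeClass _⟩ := by
  exact map_uniform_aux A n m x I _ _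
end

section
/- Let A be a nonempty finite type, f : A → ℕ a frequency vector with N = ∑_a f a > 0, and p(a) = f(a)/N the corresponding empirical probability distribution. Then the normalized base-2 logarithm of the type class size converges to the entropy: lim_{k→∞, k ∈ ℕ} (1/(k·N)) · log₂( Nat.multinomial Finset.univ (fun a => k · f a) ) = H(p), where H(p) = −∑_a p(a)·log₂ p(a) (with 0·log₂ 0 = 0) and Nat.multinomial Finset.univ g = (∑_a g a)! / ∏_a (g a)! is the number of strings of length ∑ g with frequency vector g. -/
/-- The error in the crude Stirling approximation of `log m!`. -/
noncomputable def stirErr (m : ℕ) : ℝ :=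
  Real.log (m.factorial : ℝ) - m * Real.log m + m

lemma stirErr_div_tendsto :
    Filter.Tendsto (fun m : ℕ => stirErr m / m) Filter.atTop (nhds 0) := by
  have hc : Filter.Tendsto (fun m : ℕ => (m : ℝ)) Filter.atTop Filter.atTop :=
    tendsto_natCast_atTop_atTop
  have h1 : Filter.Tendsto (fun m : ℕ => Real.log (Stirling.stirlingSeq m) / m)
      Filter.atTop (nhds 0) := by
    have hp : √Real.pi ≠ 0 := by positivity
    exact ((Stirling.tendsto_stirlingSeq_sqrt_pi).log hp).div_atTop hc
  have h2 : Filter.Tendsto (fun m : ℕ => Real.log m / (m : ℝ))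
      Filter.atTop (nhds 0) := by
    have := (Real.isLittleO_log_id_atTop).tendsto_div_nhds_zero.comp hc
    exact this
  have h3 : Filter.Tendsto (fun m : ℕ => Real.log 2 / (m : ℝ))
      Filter.atTop (nhds 0) := tendsto_const_nhds.div_atTop hc
  have h4 := h1.add ((h2.add h3).const_mul (1 / 2 : ℝ))
  simp only [add_zero, mul_zero] at h4
  refine h4.congr' ?_
  filter_upwards [Filter.eventually_gt_atTop 0] with m hm
  have hm' : (m : ℝ) ≠ 0 := by positivity
  rw [Stirling.log_stirlingSeq_formula, stirErr, Real.log_mul two_ne_zero hm',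
    Real.log_div hm' (Real.exp_ne_zero 1), Real.log_exp]
  field_simp
  ring

lemma stirErr_mul_div_tendsto (c : ℕ) :
    Filter.Tendsto (fun k : ℕ => stirErr (k * c) / k) Filter.atTop (nhds 0) := by
  rcases Nat.eq_zero_or_pos c with rfl | hc
  · simp [stirErr]
  · have h : Filter.Tendsto (fun k : ℕ => k * c) Filter.atTop Filter.atTop :=
      Filter.tendsto_id.atTop_mul_const' hc
    have h2 := (stirErr_div_tendsto.comp h).const_mul (c : ℝ)
    rw [mul_zero] at h2
    refine h2.congr fun k => ?_
    have : (c : ℝ) ≠ 0 := by positivity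
    simp only [Function.comp]
    push_cast
    rw [mul_comm (k : ℝ), ← div_div, mul_div_assoc', mul_div_cancel₀ _ this]

lemma log_factorial_mul (k c : ℕ) (hk : 0 < k) :
    Real.log ((k * c).factorial : ℝ) =
      stirErr (k * c) + k * (c * Real.log c) + c * (k * Real.log k - k) := by
  rcases Nat.eq_zero_or_pos c with rfl | hc
  · simp [stirErr]
  · have h1 : (c : ℝ) ≠ 0 := by positivity
    have h2 : (k : ℝ) ≠ 0 := by positivity
    rw [stirErr]
    push_cast
    rw [Real.log_mul h2 h1]
    ring

lemma log_multinomial_mul {A : Type} [Fintype A] (f : A → ℕ) (k : ℕ) (hk : 0 < k) :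
    Real.log (Nat.multinomial Finset.univ (fun a => k * f a) : ℝ) =
      stirErr (k * ∑ a, f a) - ∑ a, stirErr (k * f a)
        + k * (((∑ a, f a : ℕ) : ℝ) * Real.log ((∑ a, f a : ℕ) : ℝ)
          - ∑ a, (f a : ℝ) * Real.log (f a)) := by
  have h := Nat.multinomial_spec Finset.univ (fun a => k * f a)
  have h' := congrArg (fun n : ℕ => Real.log (n : ℝ)) h
  simp only [Nat.cast_mul, Nat.cast_prod] at h'
  rw [Real.log_mul (Finset.prod_ne_zero_iff.2 fun a _ => by positivity)
    (by exact_mod_cast (Nat.multinomial_pos _ _).ne'),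
    Real.log_prod (fun a _ => by positivity), ← Finset.mul_sum,
    log_factorial_mul _ _ hk] at h'
  simp only [log_factorial_mul _ _ hk, Finset.sum_add_distrib, ← Finset.mul_sum,
    ← Finset.sum_mul] at h'
  push_cast at h' ⊢
  linarith

/-- Asymptotics of type class sizes: the normalized base-2 logarithm of the
multinomial coefficient counting strings with frequency vector `k • f` tends to
the Shannon entropy of the empirical distribution `p(a) = f a / N`. -/
theorem tendsto_log_typeClassSize_entropy
    (A : Type) [Fintype A] [Nonempty A] (f : A → ℕ) (hN : 0 < ∑ a, f a) :
    Filter.Tendsto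
      (fun k : ℕ =>
        (1 / ((k : ℝ) * ((∑ a, f a : ℕ) : ℝ))) *
          Real.logb 2 ((Nat.multinomial Finset.univ (fun a => k * f a) : ℕ) : ℝ))
      Filter.atTop
      (nhds (-∑ a, ((f a : ℝ) / ((∑ b, f b : ℕ) : ℝ)) *
        Real.logb 2 ((f a : ℝ) / ((∑ b, f b : ℕ) : ℝ)))) := by
  have hsum : ((∑ a, f a : ℕ) : ℝ) = ∑ a, (f a : ℝ) := by push_cast; rfl
  have hlim := (((stirErr_mul_div_tendsto (∑ a, f a)).sub
    (tendsto_finsetSum Finset.univ fun a _ => stirErr_mul_div_tendsto (f a))).add_const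
      (((∑ a, f a : ℕ) : ℝ) * Real.log ((∑ a, f a : ℕ) : ℝ)
          - ∑ a, (f a : ℝ) * Real.log (f a))).const_mul
      (1 / (((∑ a, f a : ℕ) : ℝ) * Real.log 2))
  have hl2 : Real.log 2 ≠ 0 := (Real.log_pos one_lt_two).ne'
  have hlimit : -∑ a, ((f a : ℝ) / ((∑ b, f b : ℕ) : ℝ)) *
        Real.logb 2 ((f a : ℝ) / ((∑ b, f b : ℕ) : ℝ)) =
      1 / (((∑ a, f a : ℕ) : ℝ) * Real.log 2) * (0 - ∑ _a : A, (0 : ℝ) +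
        (((∑ a, f a : ℕ) : ℝ) * Real.log ((∑ a, f a : ℕ) : ℝ)
          - ∑ a, (f a : ℝ) * Real.log (f a))) := by
    have hN' : ((∑ a, f a : ℕ) : ℝ) ≠ 0 := by exact_mod_cast hN.ne'
    have key : ∀ a, ((f a : ℝ) / ((∑ b, f b : ℕ) : ℝ)) *
        Real.logb 2 ((f a : ℝ) / ((∑ b, f b : ℕ) : ℝ)) =
        1 / (((∑ a, f a : ℕ) : ℝ) * Real.log 2) *
          ((f a : ℝ) * Real.log (f a) - f a * Real.log ((∑ a, f a : ℕ) : ℝ)) := by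
      intro a
      rcases Nat.eq_zero_or_pos (f a) with h0 | h0
      · simp [h0]
      · have h1 : (f a : ℝ) ≠ 0 := by positivity
        rw [Real.logb, Real.log_div h1 hN']
        field_simp
    rw [Finset.sum_congr rfl fun a _ => key a, ← Finset.mul_sum, Finset.sum_sub_distrib,
      ← Finset.sum_mul, ← hsum, Finset.sum_const_zero]
    ring
  rw [hlimit]
  refine hlim.congr' ?_
  filter_upwards [Filter.eventually_gt_atTop 0] with k hk
  have hk' : (k : ℝ) ≠ 0 := by positivity
  have hN' : ((∑ a, f a : ℕ) : ℝ) ≠ 0 := by exact_mod_cast hN.ne'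
  rw [Real.logb, log_multinomial_mul f k hk, ← Finset.sum_div]
  field_simp
end

section
/- Let F be a finite field, V a finite-dimensional vector space over F, n ∈ ℕ, and U : Fin n → Subspace F V a collection of subspaces. Let X be uniformly distributed on the dual space Module.Dual F V and define X_i = X|_{U_i}, the restriction of the random functional to U_i. Then for every I : Finset (Fin n), the base-2 Shannon entropy of the joint random variable (X_i)_{i∈I} — i.e., of the pushforward of the uniform pmf on Module.Dual F V under the map φ ↦ (φ|_{U_i})_{i∈I} — equals Module.finrank F (⨆_{i∈I} U i) · log₂ (Fintype.card F). Hence the entropy vector of X equals log₂|F| times the rank vector of the subspace collection. -/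
lemma aux_map_range {A B : Type} [AddCommGroup A] [AddCommGroup B] [Fintype A]
    (f : A →+ B) (b : B) (hb : b ∈ f.range) :
    ((PMF.map f (PMF.uniformOfFintype A)) b).toReal = ((Nat.card f.range : ℝ))⁻¹ := by
  classical
  obtain ⟨a0, rfl⟩ := hb
  have hcard : (Finset.univ.filter (fun a => f a0 = f a)).card = Nat.card f.ker := by
    rw [Nat.card_eq_fintype_card, Fintype.card_subtype]
    refine Finset.card_bij (fun a _ => a - a0) ?_ ?_ ?_
    · intro a ha
      have := (Finset.mem_filter.1 ha).2
      simp [AddMonoidHom.mem_ker, this]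
    · intro a _ b _ h
      simpa using h
    · intro c hc
      have hc' : f c = 0 := by simpa [AddMonoidHom.mem_ker] using hc
      exact ⟨c + a0, by simp [hc'], by simp⟩
  have h1 : Nat.card f.ker * Nat.card f.range = Fintype.card A := by
    rw [← Nat.card_eq_fintype_card, ← AddSubgroup.index_ker, AddSubgroup.card_mul_index]
  have hk : (Nat.card f.ker : ℝ) ≠ 0 := by
    exact_mod_cast Nat.card_pos.ne'
  have h2 : (Nat.card f.ker : ℝ) * Nat.card f.range = Fintype.card A := by exact_mod_cast h1
  rw [PMF.map_apply, tsum_fintype]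
  simp only [PMF.uniformOfFintype_apply]
  rw [← Finset.sum_filter, Finset.sum_const, hcard]
  simp only [nsmul_eq_mul, ENNReal.toReal_mul, ENNReal.toReal_natCast, ENNReal.toReal_inv]
  rw [← h2, mul_inv, ← mul_assoc, mul_inv_cancel₀ hk, one_mul]

lemma aux_entropy {A B : Type} [AddCommGroup A] [AddCommGroup B] [Fintype A]
    (f : A →+ B) :
    shannonEntropy (PMF.map f (PMF.uniformOfFintype A)) = Real.logb 2 (Nat.card f.range) := by
  classical
  have hfin : Finite f.range := Set.finite_range f
  have := Fintype.ofFinite f.range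
  have h0 : (Nat.card f.range : ℝ) ≠ 0 := by exact_mod_cast Nat.card_pos.ne'
  unfold shannonEntropy
  have hs : Function.support (fun x => ((PMF.map f (PMF.uniformOfFintype A)) x).toReal *
      Real.logb 2 (((PMF.map f (PMF.uniformOfFintype A)) x).toReal)) ⊆ (f.range : Set B) := by
    intro b hb
    by_contra hn
    apply hb
    have : (PMF.map f (PMF.uniformOfFintype A)) b = 0 := by
      rw [PMF.apply_eq_zero_iff, PMF.support_map]
      rintro ⟨a, _, rfl⟩
      exact hn ⟨a, rfl⟩
    simp [this]
  rw [← tsum_subtype_eq_of_support_subset hs]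
  have : ∀ x : (f.range : Set B), ((PMF.map f (PMF.uniformOfFintype A)) x).toReal *
      Real.logb 2 (((PMF.map f (PMF.uniformOfFintype A)) x).toReal) =
      ((Nat.card f.range : ℝ))⁻¹ * Real.logb 2 ((Nat.card f.range : ℝ))⁻¹ := by
    intro x
    rw [aux_map_range f x x.2]
  rw [tsum_congr this, tsum_const, Real.logb_inv]
  change -(Nat.card f.range • _) = _
  rw [nsmul_eq_mul]
  field_simp

/-- A uniformly random functional `X` on a finite-dimensional space over a finite
field, restricted to the subspaces `U i` for `i ∈ I`, has joint Shannon entropy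
`dim (∑_{i ∈ I} U i) · log₂ |F|`: the entropy vector is `log₂|F|` times the rank
vector of the subspace collection. -/
theorem entropy_of_restricted_uniform_functional
    (F : Type) [Field F] [Fintype F]
    (V : Type) [AddCommGroup V] [Module F V] [FiniteDimensional F V]
    [Fintype (Module.Dual F V)]
    (n : ℕ) (U : Fin n → Subspace F V) (I : Finset (Fin n)) :
    shannonEntropy
        (PMF.map
          (fun φ : Module.Dual F V => fun i : I => φ.domRestrict (U i.1))
          (PMF.uniformOfFintype (Module.Dual F V))) =
      (Module.finrank F ↥(⨆ i ∈ I, U i) : ℝ) * Real.logb 2 (Fintype.card F) := by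
  let L : Module.Dual F V →ₗ[F] ((i : I) → Module.Dual F (U i.1)) :=
    LinearMap.pi (fun i => (U i.1).dualRestrict)
  have hL := aux_entropy L.toAddMonoidHom
  have hker : LinearMap.ker L = (⨆ i ∈ I, U i).dualAnnihilator := by
    rw [LinearMap.ker_pi]
    simp only [Submodule.dualAnnihilator_iSup_eq, Submodule.dualRestrict_ker_eq_dualAnnihilator,
      iInf_subtype]
  have hr := LinearMap.finrank_range_add_finrank_ker L
  have hd := Subspace.finrank_add_finrank_dualAnnihilator_eq (⨆ i ∈ I, U i)
  rw [hker, Subspace.dual_finrank_eq] at hr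
  have hrk : Module.finrank F (LinearMap.range L) = Module.finrank F ↥(⨆ i ∈ I, U i) := by omega
  have hc : Nat.card L.toAddMonoidHom.range =
      Fintype.card F ^ Module.finrank F ↥(⨆ i ∈ I, U i) := by
    rw [← hrk, ← Nat.card_eq_fintype_card]
    exact Module.natCard_eq_pow_finrank (K := F) (V := LinearMap.range L)
  rw [hc, Nat.cast_pow, Real.logb_pow] at hL
  exact hL
end
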